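/- arXiv:2006.15858 — 2 statements merged into one kernel-verified Lean document; each statement's English description precedes it below -/
import Mathlib

section
/- If w ∈ RH_q(ℝ^d) for some 1 < q < ∞, then there exists q < p < ∞ such that w ∈ RH_p(ℝ^d) (openness of the reverse Hölder classes). -/
open MeasureTheory Filter Topology ENNReal NNReal
noncomputable section

/-- Shorthand: `ENNReal.ofReal`. -/
def oR (t : ℝ) : ℝ≥0∞ := ENNReal.ofReal t

/-- An axis-parallel cube in `ℝ^d`. -/
def IsCube {d : ℕ} (Q : Set (Fin d → ℝ)) : Prop :=
  ∃ (a : Fin d → ℝ) (r : ℝ), 0 < r ∧ Q = Set.univ.pi fun i => Set.Icc (a i) (a i + r)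

/-- The `ℝ≥0∞`-valued average of `g` over a set `Q`. -/
def avgE {d : ℕ} (Q : Set (Fin d → ℝ)) (g : (Fin d → ℝ) → ℝ≥0∞) : ℝ≥0∞ :=
  (volume Q)⁻¹ * ∫⁻ x in Q, g x

/-- A weight: locally integrable and a.e. positive. -/
def IsWeight {d : ℕ} (w : (Fin d → ℝ) → ℝ) : Prop :=
  MeasureTheory.LocallyIntegrable w volume ∧ ∀ᵐ x ∂(volume : Measure (Fin d → ℝ)), 0 < w x

/-- The Muckenhoupt `A_p` constant, `1 < p < ∞`. -/
def ApConst {d : ℕ} (p : ℝ) (w : (Fin d → ℝ) → ℝ) : ℝ≥0∞ :=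
  ⨆ Q : {S : Set (Fin d → ℝ) // IsCube S},
    avgE Q.1 (fun x => oR (w x)) *
      (avgE Q.1 fun x => oR (w x ^ (-(1:ℝ) / (p - 1)))) ^ (p - 1)

/-- The Muckenhoupt `A_1` constant. -/
def A1Const {d : ℕ} (w : (Fin d → ℝ) → ℝ) : ℝ≥0∞ :=
  ⨆ Q : {S : Set (Fin d → ℝ) // IsCube S},
    avgE Q.1 (fun x => oR (w x)) *
      essSup (fun x => oR ((w x)⁻¹)) (volume.restrict Q.1)

/-- Membership in the Muckenhoupt class `A_p(ℝ^d)`, `1 < p < ∞`. -/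
def MemAp {d : ℕ} (p : ℝ) (w : (Fin d → ℝ) → ℝ) : Prop :=
  IsWeight w ∧ ApConst p w < ⊤

/-- The Muckenhoupt–Wheeden `A_{p,q}` constant:
`sup_Q ⟨w^q⟩_Q^{1/q} ⟨w^{-p'}⟩_Q^{1/p'}` with `p' = p/(p-1)`. -/
def ApqConst {d : ℕ} (p q : ℝ) (w : (Fin d → ℝ) → ℝ) : ℝ≥0∞ :=
  ⨆ Q : {S : Set (Fin d → ℝ) // IsCube S},
    (avgE Q.1 fun x => oR (w x ^ q)) ^ (1 / q) *
      (avgE Q.1 fun x => oR (w x ^ (-(p / (p - 1))))) ^ ((p - 1) / p)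

/-- Membership in `A_{p,q}(ℝ^d)`. -/
def MemApq {d : ℕ} (p q : ℝ) (w : (Fin d → ℝ) → ℝ) : Prop :=
  IsWeight w ∧ ApqConst p q w < ⊤

/-- The reverse Hölder constant `sup_Q ⟨w^s⟩_Q^{1/s} ⟨w⟩_Q^{-1}`. -/
def RHConst {d : ℕ} (s : ℝ) (w : (Fin d → ℝ) → ℝ) : ℝ≥0∞ :=
  ⨆ Q : {S : Set (Fin d → ℝ) // IsCube S},
    (avgE Q.1 fun x => oR (w x ^ s)) ^ (1 / s) * (avgE Q.1 fun x => oR (w x))⁻¹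

/-- Membership in the reverse Hölder class `RH_s(ℝ^d)`. -/
def MemRH {d : ℕ} (s : ℝ) (w : (Fin d → ℝ) → ℝ) : Prop :=
  IsWeight w ∧ RHConst s w < ⊤

/-- Conjugate exponent `t' = t/(t-1)`. -/
def conjExp (t : ℝ) : ℝ := t / (t - 1)

/-- Membership in the limited-range class `A_{q/p_-} ∩ RH_{(p_+/q)'}`, with the
convention that for `q = p_-` the condition is the `A_1` condition and for `q = p_+`
the reverse Hölder condition is vacuous. -/
def MemLR {d : ℕ} (pm pp q : ℝ) (w : (Fin d → ℝ) → ℝ) : Prop :=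
  IsWeight w ∧ (q = pm → A1Const w < ⊤) ∧ (pm < q → ApConst (q / pm) w < ⊤) ∧
    (q < pp → RHConst (conjExp (pp / q)) w < ⊤)

/-- The weighted `L^p` (quasi-)norm `(∫ |f|^p w)^{1/p}`, `ℝ≥0∞`-valued. -/
def wnorm {d : ℕ} (p : ℝ) (w : (Fin d → ℝ) → ℝ) (f : (Fin d → ℝ) → ℂ) : ℝ≥0∞ :=
  (∫⁻ x, (‖f x‖₊ : ℝ≥0∞) ^ p * oR (w x)) ^ (1 / p)

/-- Membership in the weighted Lebesgue space `L^p(w)`. -/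
def MemWLp {d : ℕ} (p : ℝ) (w : (Fin d → ℝ) → ℝ) (f : (Fin d → ℝ) → ℂ) : Prop :=
  AEStronglyMeasurable f (volume : Measure (Fin d → ℝ)) ∧ wnorm p w f < ⊤

/-- `T` is bounded from `L^p(w)` to `L^q(v)`. -/
def BoundedOp {d : ℕ} (p : ℝ) (w : (Fin d → ℝ) → ℝ) (q : ℝ) (v : (Fin d → ℝ) → ℝ)
    (T : ((Fin d → ℝ) → ℂ) →ₗ[ℂ] ((Fin d → ℝ) → ℂ)) : Prop :=
  ∃ C : ℝ≥0, ∀ f, MemWLp p w f → wnorm q v (T f) ≤ C * wnorm p w f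

/-- `T` is compact with respect to an input norm `Nin` and an output norm `Nout`:
every norm-bounded sequence of (a.e. strongly measurable) functions has a subsequence
whose image converges in the output norm. -/
def CompactWithNorms {d : ℕ} (Nin Nout : ((Fin d → ℝ) → ℂ) → ℝ≥0∞)
    (T : ((Fin d → ℝ) → ℂ) →ₗ[ℂ] ((Fin d → ℝ) → ℂ)) : Prop :=
  ∀ f : ℕ → ((Fin d → ℝ) → ℂ),
    (∀ n, AEStronglyMeasurable (f n) (volume : Measure (Fin d → ℝ))) →
    (∀ n, Nin (f n) ≤ 1) →
    ∃ (φ : ℕ → ℕ) (g : (Fin d → ℝ) → ℂ), StrictMono φ ∧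
      Tendsto (fun n => Nout (T (f (φ n)) - g)) atTop (nhds 0)

/-- `T` is a compact operator from `L^p(w)` to `L^q(v)`. -/
def CompactOp {d : ℕ} (p : ℝ) (w : (Fin d → ℝ) → ℝ) (q : ℝ) (v : (Fin d → ℝ) → ℝ)
    (T : ((Fin d → ℝ) → ℂ) →ₗ[ℂ] ((Fin d → ℝ) → ℂ)) : Prop :=
  CompactWithNorms (wnorm p w) (wnorm q v) T

/-- The closed unit strip in `ℂ`. -/
def strip : Set ℂ := {z | 0 ≤ z.re ∧ z.re ≤ 1}

/-- The open unit strip in `ℂ`. -/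
def stripInt : Set ℂ := {z | 0 < z.re ∧ z.re < 1}

/-- The norm of Calderón's complex interpolation space `[L^{p₀}(w₀), L^{p₁}(w₁)]_θ`
realized via analytic families of functions on the strip. -/
def interpNorm {d : ℕ} (p0 : ℝ) (w0 : (Fin d → ℝ) → ℝ) (p1 : ℝ) (w1 : (Fin d → ℝ) → ℝ)
    (θ : ℝ) (f : (Fin d → ℝ) → ℂ) : ℝ≥0∞ :=
  ⨅ (F : ℂ → (Fin d → ℝ) → ℂ) (_ : F (θ : ℂ) = f)
    (_ : ∀ᵐ x ∂(volume : Measure (Fin d → ℝ)),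
      ContinuousOn (fun z => F z x) strip ∧ DifferentiableOn ℂ (fun z => F z x) stripInt),
    max (⨆ t : ℝ, wnorm p0 w0 (F (t * Complex.I)))
        (⨆ t : ℝ, wnorm p1 w1 (F (1 + t * Complex.I)))

/-- An admissible growth function `φ : [0,∞) → [1,∞)`. -/
def Admissible (φ : ℝ → ℝ) : Prop :=
  (∀ t, 0 ≤ t → 1 ≤ φ t) ∧ MonotoneOn φ (Set.Ici 0) ∧
    ∃ ω > (0:ℝ), ∃ C > (0:ℝ), ∀ ζ t : ℝ, 1 ≤ ζ → 0 ≤ t → φ (ζ * t) ≤ C * ζ ^ ω * φ t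

/-- The `A_p^ζ(φ)` constant of Tang/Wu–Wang. -/
def ApZConst {d : ℕ} (φ : ℝ → ℝ) (ζ p : ℝ) (w : (Fin d → ℝ) → ℝ) : ℝ≥0∞ :=
  ⨆ Q : {S : Set (Fin d → ℝ) // IsCube S},
    avgE Q.1 (fun x => oR (w x)) *
      (avgE Q.1 fun x => oR (w x ^ (-(1:ℝ) / (p - 1)))) ^ (p - 1) *
      (oR (φ ((volume Q.1).toReal) ^ (ζ * p)))⁻¹

/-- Membership in `A_p^ζ(φ)`. -/
def MemApZ {d : ℕ} (φ : ℝ → ℝ) (ζ p : ℝ) (w : (Fin d → ℝ) → ℝ) : Prop :=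
  IsWeight w ∧ ApZConst φ ζ p w < ⊤

/-- Half-open cube. -/
def hc {d : ℕ} (a : Fin d → ℝ) (r : ℝ) : Set (Fin d → ℝ) :=
  Set.univ.pi fun i => Set.Ico (a i) (a i + r)

lemma hc_vol {d : ℕ} (a : Fin d → ℝ) (r : ℝ) : volume (hc a r) = ENNReal.ofReal r ^ d := by
  unfold hc
  rw [Real.volume_pi_Ico]
  simp

lemma hc_vol_ne_zero {d : ℕ} (a : Fin d → ℝ) {r : ℝ} (hr : 0 < r) : volume (hc a r) ≠ 0 := by
  rw [hc_vol]
  exact pow_ne_zero _ (by simpa using hr)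

lemma hc_vol_ne_top {d : ℕ} (a : Fin d → ℝ) (r : ℝ) : volume (hc a r) ≠ ⊤ := by
  rw [hc_vol]
  exact ENNReal.pow_ne_top (by simp)

lemma hc_meas {d : ℕ} (a : Fin d → ℝ) (r : ℝ) : MeasurableSet (hc a r) :=
  MeasurableSet.univ_pi fun _ => measurableSet_Ico

lemma hc_ae {d : ℕ} (a : Fin d → ℝ) (r : ℝ) :
    hc a r =ᵐ[volume] (Set.univ.pi fun i => Set.Icc (a i) (a i + r)) :=
  Measure.pi_Ico_ae_eq_pi_Icc

/-- Dyadic index. -/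
def idx {d : ℕ} (a : Fin d → ℝ) (r : ℝ) (n : ℕ) (x : Fin d → ℝ) (i : Fin d) : ℤ :=
  ⌊(x i - a i) * 2 ^ n / r⌋

/-- Dyadic corner. -/
def crn {d : ℕ} (a : Fin d → ℝ) (r : ℝ) (n : ℕ) (x : Fin d → ℝ) (i : Fin d) : ℝ :=
  a i + idx a r n x i * (r / 2 ^ n)

/-- Dyadic cube of level `n` containing `x`. -/
def dy {d : ℕ} (a : Fin d → ℝ) (r : ℝ) (n : ℕ) (x : Fin d → ℝ) : Set (Fin d → ℝ) :=
  hc (crn a r n x) (r / 2 ^ n)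

lemma mem_dy {d : ℕ} (a : Fin d → ℝ) {r : ℝ} (hr : 0 < r) (n : ℕ) (x y : Fin d → ℝ) :
    y ∈ dy a r n x ↔ idx a r n y = idx a r n x := by
  unfold dy hc
  rw [Set.mem_univ_pi, funext_iff]
  refine forall_congr' fun i => ?_
  rw [show idx a r n y i = ⌊(y i - a i) * 2 ^ n / r⌋ from rfl, Int.floor_eq_iff]
  have h2 : (0:ℝ) < 2 ^ n := by positivity
  rw [le_div_iff₀ hr, div_lt_iff₀ hr, Set.mem_Ico]
  unfold crn
  set k : ℝ := (idx a r n x i : ℝ)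
  have e : (k * (r / 2 ^ n)) * 2 ^ n = k * r := by field_simp
  have e2 : (k * (r / 2 ^ n) + r / 2 ^ n) * 2 ^ n = (k + 1) * r := by field_simp
  constructor
  · rintro ⟨h, h'⟩
    constructor
    · rw [← e]; gcongr; linarith
    · rw [← e2]; gcongr; linarith
  · rintro ⟨h, h'⟩
    rw [← e] at h
    rw [← e2] at h'
    have := le_of_mul_le_mul_right h h2
    have := lt_of_mul_lt_mul_right h' h2.le
    constructor <;> linarith

lemma idx_succ {d : ℕ} (a : Fin d → ℝ) (r : ℝ) (n : ℕ) (x : Fin d → ℝ) (i : Fin d) :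
    idx a r n x i = idx a r (n + 1) x i / 2 := by
  unfold idx
  have := Int.floor_div_natCast ((x i - a i) * 2 ^ (n + 1) / r) 2
  push_cast at this
  rw [← this]
  congr 1
  rw [pow_succ]
  ring

lemma idx_le {d : ℕ} {a : Fin d → ℝ} {r : ℝ} {n m : ℕ} (hmn : m ≤ n) {x y : Fin d → ℝ}
    (h : idx a r n x = idx a r n y) : idx a r m x = idx a r m y := by
  induction n, hmn using Nat.le_induction with
  | base => exact h
  | succ n _ ih =>
    apply ih
    funext i
    rw [idx_succ a r n x, idx_succ a r n y, h]

lemma dy_congr {d : ℕ} {a : Fin d → ℝ} {r : ℝ} {n : ℕ} {x y : Fin d → ℝ}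
    (h : idx a r n x = idx a r n y) : dy a r n x = dy a r n y := by
  unfold dy
  congr 1
  funext i
  unfold crn
  rw [h]

lemma self_mem_dy {d : ℕ} (a : Fin d → ℝ) {r : ℝ} (hr : 0 < r) (n : ℕ) (x : Fin d → ℝ) :
    x ∈ dy a r n x := (mem_dy a hr n x x).2 rfl

lemma dy_anti {d : ℕ} (a : Fin d → ℝ) {r : ℝ} (hr : 0 < r) {m n : ℕ} (h : m ≤ n)
    (x : Fin d → ℝ) : dy a r n x ⊆ dy a r m x := by
  intro y hy
  rw [mem_dy a hr] at hy ⊢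
  exact idx_le h hy

lemma dy_zero {d : ℕ} (a : Fin d → ℝ) {r : ℝ} (hr : 0 < r) {x : Fin d → ℝ}
    (hx : x ∈ hc a r) : dy a r 0 x = hc a r := by
  unfold dy
  have : crn a r 0 x = a := by
    funext i
    unfold crn
    have : idx a r 0 x i = 0 := by
      unfold idx
      rw [Int.floor_eq_iff]
      have := hx i (Set.mem_univ i)
      simp only [Set.mem_Ico] at this
      constructor
      · simp only [pow_zero, mul_one, Int.cast_zero]
        exact div_nonneg (by linarith) hr.le
      · rw [div_lt_iff₀ hr]; simp; linarith
    rw [this]; simp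
  rw [this]; simp

lemma dy_vol {d : ℕ} (a : Fin d → ℝ) (r : ℝ) (n : ℕ)
    (x : Fin d → ℝ) : volume (dy a r n x) = 2 ^ d * volume (dy a r (n + 1) x) := by
  unfold dy
  rw [hc_vol, hc_vol, ← mul_pow]
  congr 1
  rw [show (2 : ℝ≥0∞) = ENNReal.ofReal 2 by simp, ← ENNReal.ofReal_mul (by norm_num)]
  congr 1
  field_simp
  ring

lemma leb_diff {d : ℕ} (V : (Fin d → ℝ) → ℝ≥0∞) (hV : AEMeasurable V volume) (a : Fin d → ℝ)
    (r : ℝ) (hr : 0 < r) (hfin : ∫⁻ x in hc a r, V x ≠ ⊤) (T : ℝ≥0∞) :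
    ∀ᵐ x ∂(volume : Measure (Fin d → ℝ)), x ∈ hc a r →
      (∀ n, avgE (dy a r n x) V ≤ T) → V x ≤ T := by
  have hf : AEMeasurable ((hc a r).indicator V) volume := hV.indicator (hc_meas a r)
  have h'f : ∫⁻ x, (hc a r).indicator V x ≠ ⊤ := by
    rwa [lintegral_indicator (hc_meas a r)]
  filter_upwards [(IsUnifLocDoublingMeasure.vitaliFamily
    (volume : Measure (Fin d → ℝ)) 1).ae_tendsto_lintegral_div hf h'f] with x hx hxQ hT
  let δ : ℕ → ℝ := fun n => r / 2 ^ n / 2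
  let c : ℕ → Fin d → ℝ := fun n i => crn a r n x i + δ n
  have hδ0 : ∀ n, 0 < δ n := fun n => by positivity
  have hcb : ∀ n, Metric.closedBall (c n) (δ n) =
      Set.univ.pi fun i => Set.Icc (crn a r n x i) (crn a r n x i + r / 2 ^ n) := by
    intro n
    rw [closedBall_pi _ (hδ0 n).le]
    congr 1
    funext i
    rw [Real.closedBall_eq_Icc]
    congr 1 <;> simp only [c, δ] <;> ring
  have hδ : Tendsto δ atTop (𝓝[>] 0) := by
    rw [tendsto_nhdsWithin_iff]
    refine ⟨?_, Eventually.of_forall hδ0⟩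
    have h1 : Tendsto (fun n : ℕ => r / 2 * (1 / 2 : ℝ) ^ n) atTop (𝓝 (r / 2 * 0)) :=
      (_root_.tendsto_pow_atTop_nhds_zero_of_lt_one (by norm_num) (by norm_num)).const_mul _
    rw [mul_zero] at h1
    refine h1.congr fun n => ?_
    simp only [δ, one_div, inv_pow]
    field_simp
  have hmem : ∀ᶠ n in atTop, x ∈ Metric.closedBall (c n) (1 * δ n) := by
    refine Eventually.of_forall fun n => ?_
    rw [one_mul, hcb]
    intro i hi
    exact Set.Ico_subset_Icc_self (self_mem_dy a hr n x i hi)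
  have := hx.comp (IsUnifLocDoublingMeasure.tendsto_closedBall_filterAt volume c δ hδ hmem)
  rw [Set.indicator_of_mem hxQ] at this
  refine le_of_tendsto this (Eventually.of_forall fun n => ?_)
  refine le_trans (le_of_eq ?_) (hT n)
  simp only [Function.comp]
  rw [hcb]
  have hae := hc_ae (crn a r n x) (r / 2 ^ n)
  rw [← measure_congr hae, ← setLIntegral_congr hae, avgE, ENNReal.div_eq_inv_mul]
  congr 1
  refine setLIntegral_congr_fun (hc_meas _ _) fun y hy => ?_
  refine Set.indicator_of_mem ?_ _
  rw [← dy_zero a hr hxQ]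
  exact dy_anti a hr (Nat.zero_le n) x hy

lemma cz {d : ℕ} (V : (Fin d → ℝ) → ℝ≥0∞) (hV : AEMeasurable V volume) (a : Fin d → ℝ)
    (r : ℝ) (hr : 0 < r) (hfin : ∫⁻ x in hc a r, V x ≠ ⊤) (T : ℝ≥0∞)
    (hT : avgE (hc a r) V ≤ T) :
    ∃ S : Set (Set (Fin d → ℝ)), S.Countable ∧ S.PairwiseDisjoint id ∧
      (∀ C ∈ S, C ⊆ hc a r ∧ T < avgE C V ∧ avgE C V ≤ 2 ^ d * T ∧ ∃ b s, 0 < s ∧ C = hc b s) ∧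
      ∀ᵐ x ∂(volume : Measure (Fin d → ℝ)), x ∈ hc a r → x ∉ ⋃₀ S → V x ≤ T := by
  refine ⟨{C | ∃ x ∈ hc a r, ∃ n, C = dy a r n x ∧ T < avgE (dy a r n x) V ∧
    ∀ m < n, avgE (dy a r m x) V ≤ T}, ?_, ?_, ?_, ?_⟩
  · refine (Set.countable_range (fun p : ℕ × (Fin d → ℤ) =>
      hc (fun i => a i + p.2 i * (r / 2 ^ p.1)) (r / 2 ^ p.1))).mono ?_
    rintro C ⟨x, -, n, rfl, -⟩
    exact ⟨(n, idx a r n x), rfl⟩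
  · have key : ∀ x y z : Fin d → ℝ, ∀ n m, n ≤ m → z ∈ dy a r n x → z ∈ dy a r m y →
        T < avgE (dy a r n x) V → (∀ k < m, avgE (dy a r k y) V ≤ T) →
        dy a r n x = dy a r m y := by
      intro x y z n m hnm hzx hzy h1 h2
      rw [mem_dy a hr] at hzx hzy
      have e1 := dy_congr hzx
      have e2 := dy_congr (idx_le hnm hzy)
      rcases hnm.eq_or_lt with rfl | hlt
      · rw [← e1, e2]
      · exfalso
        have := h2 n hlt
        rw [← e2, e1] at this
        exact absurd h1 (not_lt.2 this)
    rintro C ⟨x, hx, n, rfl, h1, h2⟩ C' ⟨y, hy, m, rfl, h3, h4⟩ hne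
    refine Set.disjoint_left.2 fun z hz hz' => hne ?_
    simp only [id] at hz hz'
    rcases le_total n m with h | h
    · exact key x y z n m h hz hz' h1 h4
    · exact (key y x z m n h hz' hz h3 h2).symm
  · rintro C ⟨x, hx, n, rfl, h1, h2⟩
    refine ⟨?_, h1, ?_, _, _, (by positivity : 0 < r / 2 ^ n), rfl⟩
    · rw [← dy_zero a hr hx]; exact dy_anti a hr (Nat.zero_le n) x
    · rcases n with _ | n
      · rw [dy_zero a hr hx] at h1
        exact absurd h1 (not_lt.2 hT)
      · refine le_trans ?_ (mul_le_mul_right (h2 n (Nat.lt_succ_self n)) _)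
        unfold avgE
        rw [dy_vol a r n x, ENNReal.mul_inv (Or.inl (by simp)) (Or.inl (by finiteness)), ← mul_assoc,
          ← mul_assoc, ENNReal.mul_inv_cancel (by simp) (by finiteness), one_mul]
        gcongr
        exact dy_anti a hr (Nat.le_succ n) x
  · filter_upwards [leb_diff V hV a r hr hfin T] with x hx hxQ hxS
    refine hx hxQ ?_
    by_contra hcon
    push Not at hcon
    classical
    apply hxS
    refine ⟨dy a r (Nat.find hcon) x, ⟨x, hxQ, Nat.find hcon, rfl, Nat.find_spec hcon, ?_⟩,
      self_mem_dy a hr _ x⟩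
    intro m hm
    exact not_lt.1 (Nat.find_min hcon hm)

lemma holder_set {d : ℕ} (W : (Fin d → ℝ) → ℝ≥0∞) (hW : AEMeasurable W volume) {q : ℝ}
    (hq : 1 < q) (F : Set (Fin d → ℝ)) :
    ∫⁻ x in F, W x ≤ (∫⁻ x in F, W x ^ q) ^ (1 / q) * volume F ^ (1 - 1 / q) := by
  have hc := Real.HolderConjugate.conjExponent hq
  have := ENNReal.lintegral_mul_le_Lp_mul_Lq (volume.restrict F) hc (f := W) (g := fun _ => 1)
    hW.restrict aemeasurable_const
  simp only [Pi.mul_apply, mul_one, ENNReal.one_rpow, lintegral_const, one_mul,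
    Measure.restrict_apply MeasurableSet.univ, Set.univ_inter] at this
  convert this using 3
  have := hc.inv_add_inv_eq_one
  simp only [one_div]
  linarith

lemma ainf {d : ℕ} (W : (Fin d → ℝ) → ℝ≥0∞) (hW : AEMeasurable W volume) {q : ℝ}
    (hq : 1 < q) (C : ℝ≥0∞) (hC1 : 1 ≤ C) (hC : C ≠ ⊤)
    (hI : ∀ (a : Fin d → ℝ) (r : ℝ), 0 < r → ∫⁻ x in hc a r, W x ≠ ⊤)
    (hV : ∀ (a : Fin d → ℝ) (r : ℝ), 0 < r → ∫⁻ x in hc a r, W x ^ q ≠ ⊤)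
    (hRH : ∀ (a : Fin d → ℝ) (r : ℝ), 0 < r →
      (avgE (hc a r) fun x => W x ^ q) ^ (1 / q) ≤ C * avgE (hc a r) W) :
    ∃ α β : ℝ≥0∞, α ≠ 0 ∧ α ≤ 1 ∧ β < 1 ∧ ∀ (a : Fin d → ℝ) (r : ℝ), 0 < r →
      ∀ E ⊆ hc a r, MeasurableSet E → volume E ≤ α * volume (hc a r) →
        ∫⁻ x in E, W x ^ q ≤ β * ∫⁻ x in hc a r, W x ^ q := by
  have hq0 : 0 < q := by linarith
  set s : ℝ := 1 - 1 / q with hs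
  have hs0 : 0 < s := by rw [hs, sub_pos, div_lt_one hq0]; exact hq
  have h2C1 : 1 ≤ 2 * C := by
    calc (1 : ℝ≥0∞) ≤ C := hC1
      _ ≤ 2 * C := le_mul_of_one_le_left (by simp) (by norm_num)
  have h2C0 : 2 * C ≠ 0 := (lt_of_lt_of_le one_pos h2C1).ne'
  have h2Ct : 2 * C ≠ ⊤ := by finiteness
  have hd0 : (2 * C) ^ q ≠ 0 := by simp [ENNReal.rpow_eq_zero_iff, h2C0, h2Ct, hq0.le]
  have hdt : (2 * C) ^ q ≠ ⊤ := ENNReal.rpow_ne_top_of_nonneg hq0.le h2Ct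
  refine ⟨(2 * C)⁻¹ ^ (1 / s), 1 - ((2 * C) ^ q)⁻¹, ?_, ?_, ?_, ?_⟩
  · simp [ENNReal.rpow_eq_zero_iff, h2C0, h2Ct, hs0.le]
  · exact ENNReal.rpow_le_one (ENNReal.inv_le_one.2 h2C1) (by positivity)
  · exact ENNReal.sub_lt_self (by simp) (by simp) (by simpa using hdt)
  intro a r hr E hE hEm hvol
  set Q := hc a r with hQ
  set m := volume Q with hm
  have hm0 : m ≠ 0 := hc_vol_ne_zero a hr
  have hmt : m ≠ ⊤ := hc_vol_ne_top a r
  set I := ∫⁻ x in Q, W x with hIdef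
  have hIt : I ≠ ⊤ := hI a r hr
  set v := ∫⁻ x in Q, W x ^ q with hv
  have hvt : v ≠ ⊤ := hV a r hr
  set u := ∫⁻ x in Q \ E, W x ^ q with hu
  have hut : u ≠ ⊤ := ne_top_of_le_ne_top hvt (lintegral_mono_set Set.sdiff_subset)
  have hms0 : m ^ s ≠ 0 := by simp [ENNReal.rpow_eq_zero_iff, hm0, hmt]
  have hmst : m ^ s ≠ ⊤ := ENNReal.rpow_ne_top_of_nonneg hs0.le hmt
  -- the reverse Hoelder bound without averages
  have star : v ^ (1 / q) * m ^ s ≤ C * I := by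
    have h := hRH a r hr
    unfold avgE at h
    rw [← hQ, ← hm, ← hv, ← hIdef, ENNReal.mul_rpow_of_nonneg _ _ (by positivity)] at h
    have h' := mul_le_mul_right h m
    have e1 : m * (m⁻¹ ^ (1 / q) * v ^ (1 / q)) = v ^ (1 / q) * m ^ s := by
      have : m * m⁻¹ ^ (1 / q) = m ^ s := by
        rw [ENNReal.inv_rpow, ← ENNReal.rpow_neg, hs, sub_eq_add_neg,
          ENNReal.rpow_add _ _ hm0 hmt, ENNReal.rpow_one]
      rw [← mul_assoc, this, mul_comm]
    have e2 : m * (C * (m⁻¹ * I)) = C * I := by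
      rw [mul_left_comm, ← mul_assoc m, ENNReal.mul_inv_cancel hm0 hmt, one_mul]
    rwa [e1, e2] at h'
  have hEle : ∫⁻ x in E, W x ≤ 2⁻¹ * I := by
    calc ∫⁻ x in E, W x ≤ (∫⁻ x in E, W x ^ q) ^ (1 / q) * volume E ^ s := holder_set W hW hq E
      _ ≤ v ^ (1 / q) * ((2 * C)⁻¹ ^ (1 / s) * m) ^ s := by
          gcongr
          exact lintegral_mono_set hE
      _ = (2 * C)⁻¹ * (v ^ (1 / q) * m ^ s) := by
          rw [ENNReal.mul_rpow_of_nonneg _ _ hs0.le, ← ENNReal.rpow_mul,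
            one_div_mul_cancel hs0.ne', ENNReal.rpow_one]
          ring
      _ ≤ (2 * C)⁻¹ * (C * I) := by gcongr
      _ = 2⁻¹ * I := by
          rw [ENNReal.mul_inv (Or.inl (by simp)) (Or.inl (by simp)), mul_assoc, ← mul_assoc C⁻¹,
            ENNReal.inv_mul_cancel (lt_of_lt_of_le one_pos hC1).ne' hC, one_mul]
  have hsplit : (∫⁻ x in E, W x) + ∫⁻ x in Q \ E, W x = I := by
    have := lintegral_inter_add_sdiff (μ := volume) W Q hEm
    rwa [Set.inter_eq_self_of_subset_right hE] at this
  have hI2 : I ≤ 2 * (u ^ (1 / q) * m ^ s) := by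
    have h1 : ∫⁻ x in Q \ E, W x ≤ u ^ (1 / q) * m ^ s := by
      refine (holder_set W hW hq (Q \ E)).trans ?_
      gcongr
      exact measure_mono Set.sdiff_subset
    have h2 : 2⁻¹ * I + 2⁻¹ * I ≤ 2⁻¹ * I + ∫⁻ x in Q \ E, W x := by
      calc 2⁻¹ * I + 2⁻¹ * I = I := by rw [← add_mul, ENNReal.inv_two_add_inv_two, one_mul]
        _ = _ := hsplit.symm
        _ ≤ _ := by gcongr
    have h3 : 2⁻¹ * I ≤ ∫⁻ x in Q \ E, W x :=
      (ENNReal.add_le_add_iff_left (by finiteness)).1 h2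
    calc I = 2 * (2⁻¹ * I) := by
          rw [← mul_assoc, ENNReal.mul_inv_cancel (by simp) (by simp), one_mul]
      _ ≤ _ := mul_le_mul_right (h3.trans h1) 2
  have hvu : v ^ (1 / q) ≤ 2 * C * u ^ (1 / q) := by
    have : v ^ (1 / q) * m ^ s ≤ (2 * C * u ^ (1 / q)) * m ^ s := by
      calc _ ≤ C * I := star
        _ ≤ C * (2 * (u ^ (1 / q) * m ^ s)) := by gcongr
        _ = _ := by ring
    exact (ENNReal.mul_le_mul_iff_left hms0 hmst).1 this
  have hvu' : v ≤ (2 * C) ^ q * u := by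
    have h := ENNReal.rpow_le_rpow hvu hq0.le
    rwa [ENNReal.mul_rpow_of_nonneg _ _ hq0.le, ← ENNReal.rpow_mul, ← ENNReal.rpow_mul,
      one_div_mul_cancel hq0.ne', ENNReal.rpow_one, ENNReal.rpow_one] at h
  have hvu2 : ((2 * C) ^ q)⁻¹ * v ≤ u := by
    calc _ ≤ ((2 * C) ^ q)⁻¹ * ((2 * C) ^ q * u) := by gcongr
      _ = u := by rw [← mul_assoc, ENNReal.inv_mul_cancel hd0 hdt, one_mul]
  have hsplitV : (∫⁻ x in E, W x ^ q) + u = v := by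
    have := lintegral_inter_add_sdiff (μ := volume) (fun x => W x ^ q) Q hEm
    rwa [Set.inter_eq_self_of_subset_right hE] at this
  rw [ENNReal.sub_mul (fun _ _ => hvt), one_mul]
  refine ENNReal.le_sub_of_add_le_right ?_ ?_
  · exact ne_top_of_le_ne_top hut hvu2
  · rw [← hsplitV] at hvu2 ⊢
    gcongr

lemma exists_eps (B β : ℝ≥0∞) (hB1 : 1 ≤ B) (hB : B ≠ ⊤) (hβ : β < 1) :
    ∃ ε : ℝ, 0 < ε ∧ B ^ ε * β < 1 := by
  lift B to ℝ≥0 using hB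
  lift β to ℝ≥0 using (hβ.trans_le le_top).ne
  have hB0 : (0:ℝ) < B := lt_of_lt_of_le one_pos (by exact_mod_cast hB1)
  have hc : Continuous fun ε : ℝ => (B : ℝ) ^ ε * β :=
    (Real.continuous_const_rpow hB0.ne').mul continuous_const
  have h0 : (B : ℝ) ^ (0:ℝ) * β < 1 := by simpa using (by exact_mod_cast hβ : β < 1)
  have hev : ∀ᶠ ε in 𝓝[>] (0:ℝ), (B : ℝ) ^ ε * β < 1 :=
    (hc.continuousAt.eventually_lt continuousAt_const h0).filter_mono nhdsWithin_le_nhds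
  obtain ⟨ε, h1, h2⟩ := (hev.and self_mem_nhdsWithin).exists
  refine ⟨ε, h2, ?_⟩
  rw [← ENNReal.coe_rpow_of_nonneg _ (le_of_lt h2)]
  exact_mod_cast h1

lemma absorb {X a γ : ℝ≥0∞} (hX : X ≠ ⊤) (hγ : γ < 1) (h : X ≤ a + γ * X) :
    X ≤ a * (1 - γ)⁻¹ := by
  have h1 : X * (1 - γ) ≤ a := by
    rw [ENNReal.mul_sub (fun _ _ => hX), mul_one, tsub_le_iff_right, mul_comm X]
    exact h
  rw [← div_eq_mul_inv, ENNReal.le_div_iff_mul_le]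
  · exact h1
  · left; exact (tsub_pos_of_lt hγ).ne'
  · left; finiteness

lemma step {d : ℕ} (V : (Fin d → ℝ) → ℝ≥0∞) (hVm : AEMeasurable V volume)
    (hV : ∀ (a : Fin d → ℝ) (r : ℝ), 0 < r → ∫⁻ x in hc a r, V x ≠ ⊤)
    (α β : ℝ≥0∞) (hα0 : α ≠ 0) (hα1 : α ≤ 1)
    (hA : ∀ (a : Fin d → ℝ) (r : ℝ), 0 < r →
      ∀ E ⊆ hc a r, MeasurableSet E → volume E ≤ α * volume (hc a r) →
        ∫⁻ x in E, V x ≤ β * ∫⁻ x in hc a r, V x)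
    (ε : ℝ) (hε : 0 < ε) (N l : ℝ≥0∞) (hl : l ≠ 0) (X : ℝ≥0∞)
    (hX : ∀ (a : Fin d → ℝ) (r : ℝ), 0 < r → l ≤ avgE (hc a r) V →
      ∫⁻ x in hc a r, V x * min (V x) N ^ ε ≤ X * (avgE (hc a r) V ^ ε * ∫⁻ x in hc a r, V x))
    (a : Fin d → ℝ) (r : ℝ) (hr : 0 < r) (hlQ : l ≤ avgE (hc a r) V) :
    ∫⁻ x in hc a r, V x * min (V x) N ^ ε ≤
      ((α⁻¹) ^ ε + ((2 ^ d * α⁻¹) ^ ε * β) * X) *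
        (avgE (hc a r) V ^ ε * ∫⁻ x in hc a r, V x) := by
  set Q := hc a r with hQ
  set L := avgE Q V with hL
  have hm0 : volume Q ≠ 0 := hc_vol_ne_zero a hr
  have hmt : volume Q ≠ ⊤ := hc_vol_ne_top a r
  have hαt : α ≠ ⊤ := ne_top_of_le_ne_top (by simp) hα1
  have hL0 : L ≠ 0 := fun h => hl (le_antisymm (h ▸ hlQ) (by simp))
  have hLt : L ≠ ⊤ := ENNReal.mul_ne_top (by simpa using hm0) (hV a r hr)
  set T := α⁻¹ * L with hT
  have hT0 : T ≠ 0 := mul_ne_zero (by simpa using hαt) hL0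
  have hTt : T ≠ ⊤ := ENNReal.mul_ne_top (by simpa using hα0) hLt
  have hLT : L ≤ T := le_mul_of_one_le_left (by simp) (by simpa using hα1)
  obtain ⟨S, hSc, hSd, hSp, hSae⟩ := cz V hVm a r hr (hV a r hr) T hLT
  have hmeas : ∀ C ∈ S, MeasurableSet C := by
    intro C hC
    obtain ⟨-, -, -, b, s, -, rfl⟩ := hSp C hC
    exact hc_meas b s
  set U := ⋃ C ∈ S, C with hU
  have hUs : ⋃₀ S = U := Set.sUnion_eq_biUnion
  have hUm : MeasurableSet U := MeasurableSet.biUnion hSc hmeas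
  have hUQ : U ⊆ Q := Set.iUnion₂_subset fun C hC => (hSp C hC).1
  have hint : ∀ f : (Fin d → ℝ) → ℝ≥0∞, ∫⁻ x in U, f x = ∑' C : S, ∫⁻ x in C.1, f x := by
    intro f
    exact lintegral_biUnion hSc hmeas hSd f
  have hvolU : volume U ≤ α * volume Q := by
    have h1 : T * volume U ≤ ∫⁻ x in Q, V x := by
      calc T * volume U = ∑' C : S, T * volume C.1 := by
            rw [ENNReal.tsum_mul_left]; congr 1; exact measure_biUnion hSc hSd hmeas
        _ ≤ ∑' C : S, ∫⁻ x in C.1, V x := by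
            refine ENNReal.tsum_le_tsum fun C => ?_
            obtain ⟨-, h2, -, b, s, hs, he⟩ := hSp C.1 C.2
            rw [avgE] at h2
            rw [he] at h2 ⊢
            have := h2.le
            rw [mul_comm, ← div_eq_mul_inv] at this
            exact (ENNReal.le_div_iff_mul_le (Or.inl (hc_vol_ne_zero b hs))
              (Or.inl (hc_vol_ne_top b s))).1 this
        _ = ∫⁻ x in U, V x := (hint V).symm
        _ ≤ _ := lintegral_mono_set hUQ
    have h2 : ∫⁻ x in Q, V x = T * (α * volume Q) := by
      rw [hT, hL, avgE]
      calc _ = (α⁻¹ * α) * ((volume Q)⁻¹ * volume Q) * ∫⁻ x in Q, V x := by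
            rw [ENNReal.inv_mul_cancel hα0 hαt, ENNReal.inv_mul_cancel hm0 hmt]; simp
        _ = _ := by ring
    rw [h2] at h1
    exact (ENNReal.mul_le_mul_iff_right hT0 hTt).1 h1
  have hVU := hA a r hr U hUQ hUm hvolU
  have hsplit : (∫⁻ x in U, V x * min (V x) N ^ ε) + ∫⁻ x in Q \ U, V x * min (V x) N ^ ε
      = ∫⁻ x in Q, V x * min (V x) N ^ ε := by
    have := lintegral_inter_add_sdiff (μ := volume) (fun x => V x * min (V x) N ^ ε) Q hUm
    rwa [Set.inter_eq_self_of_subset_right hUQ] at this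
  rw [← hsplit]
  have hb1 : ∫⁻ x in Q \ U, V x * min (V x) N ^ ε ≤ T ^ ε * ∫⁻ x in Q, V x := by
    calc _ ≤ ∫⁻ x in Q \ U, T ^ ε * V x := by
          refine lintegral_mono_ae ?_
          rw [ae_restrict_iff' ((hc_meas a r).diff hUm)]
          filter_upwards [hSae] with x hx hxm
          rw [mul_comm]
          gcongr
          exact (min_le_left _ _).trans (hx hxm.1 (by rw [hUs]; exact hxm.2))
      _ ≤ ∫⁻ x in Q, T ^ ε * V x := lintegral_mono_set Set.sdiff_subset
      _ = _ := lintegral_const_mul'' _ hVm.restrict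
  have hb2 : ∫⁻ x in U, V x * min (V x) N ^ ε ≤
      X * ((2 ^ d * T) ^ ε * (β * ∫⁻ x in Q, V x)) := by
    calc _ = ∑' C : S, ∫⁻ x in C.1, V x * min (V x) N ^ ε := hint _
      _ ≤ ∑' C : S, X * ((2 ^ d * T) ^ ε * ∫⁻ x in C.1, V x) := by
          refine ENNReal.tsum_le_tsum fun C => ?_
          obtain ⟨-, h2, h3, b, s, hs, he⟩ := hSp C.1 C.2
          rw [he] at h2 h3 ⊢
          refine (hX b s hs ((hlQ.trans hLT).trans h2.le)).trans ?_
          gcongr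
      _ = X * ((2 ^ d * T) ^ ε * ∫⁻ x in U, V x) := by
          rw [ENNReal.tsum_mul_left, ENNReal.tsum_mul_left, hint]
      _ ≤ _ := by gcongr
  refine (add_le_add hb2 hb1).trans (le_of_eq ?_)
  rw [hT, ← mul_assoc (2 ^ d), ENNReal.mul_rpow_of_nonneg _ L hε.le,
    ENNReal.mul_rpow_of_nonneg _ L hε.le]
  ring

lemma gehring {d : ℕ} (V : (Fin d → ℝ) → ℝ≥0∞) (hVm : AEMeasurable V volume)
    (hVt : ∀ x, V x ≠ ⊤)
    (hV : ∀ (a : Fin d → ℝ) (r : ℝ), 0 < r → ∫⁻ x in hc a r, V x ≠ ⊤)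
    (hV0 : ∀ (a : Fin d → ℝ) (r : ℝ), 0 < r → ∫⁻ x in hc a r, V x ≠ 0)
    (α β : ℝ≥0∞) (hα0 : α ≠ 0) (hα1 : α ≤ 1) (hβ : β < 1)
    (hA : ∀ (a : Fin d → ℝ) (r : ℝ), 0 < r →
      ∀ E ⊆ hc a r, MeasurableSet E → volume E ≤ α * volume (hc a r) →
        ∫⁻ x in E, V x ≤ β * ∫⁻ x in hc a r, V x) :
    ∃ ε : ℝ, 0 < ε ∧ ∃ K : ℝ≥0∞, K ≠ ⊤ ∧ ∀ (a : Fin d → ℝ) (r : ℝ), 0 < r →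
      avgE (hc a r) (fun x => V x ^ (1 + ε)) ≤ K * avgE (hc a r) V ^ (1 + ε) := by
  have hAt : α⁻¹ ≠ ⊤ := by simpa using hα0
  have hA1 : 1 ≤ α⁻¹ := by simpa using hα1
  obtain ⟨ε, hε, hγ⟩ := exists_eps (2 ^ d * α⁻¹) β
    (hA1.trans (le_mul_of_one_le_left (by simp) (one_le_pow₀ (by norm_num))))
    (ENNReal.mul_ne_top (by finiteness) hAt) hβ
  set γ := (2 ^ d * α⁻¹) ^ ε * β with hγd
  refine ⟨ε, hε, (α⁻¹) ^ ε * (1 - γ)⁻¹, ?_, ?_⟩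
  · refine ENNReal.mul_ne_top (ENNReal.rpow_ne_top_of_nonneg hε.le hAt) ?_
    exact ENNReal.inv_ne_top.2 (tsub_pos_of_lt hγ).ne'
  intro a r hr
  have havg0 : ∀ (b : Fin d → ℝ) (s : ℝ), 0 < s → avgE (hc b s) V ≠ 0 := fun b s hs =>
    mul_ne_zero (by simpa using hc_vol_ne_top b s) (hV0 b s hs)
  have havgt : ∀ (b : Fin d → ℝ) (s : ℝ), 0 < s → avgE (hc b s) V ≠ ⊤ := fun b s hs =>
    ENNReal.mul_ne_top (by simpa using hc_vol_ne_zero b hs) (hV b s hs)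
  set l := avgE (hc a r) V with hl
  have hl0 : l ≠ 0 := havg0 a r hr
  have hlt : l ≠ ⊤ := havgt a r hr
  have hN : ∀ N : ℕ, ∫⁻ x in hc a r, V x * min (V x) N ^ ε ≤
      (α⁻¹) ^ ε * (1 - γ)⁻¹ * (l ^ ε * ∫⁻ x in hc a r, V x) := by
    intro N
    let P : Type := {p : (Fin d → ℝ) × ℝ // 0 < p.2 ∧ l ≤ avgE (hc p.1 p.2) V}
    let D : P → ℝ≥0∞ := fun p => avgE (hc p.1.1 p.1.2) V ^ ε * ∫⁻ x in hc p.1.1 p.1.2, V x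
    have hD0 : ∀ p, D p ≠ 0 := fun p => by
      refine mul_ne_zero ?_ (hV0 _ _ p.2.1)
      simp [ENNReal.rpow_eq_zero_iff, havg0 _ _ p.2.1, hε.le]
    have hDt : ∀ p, D p ≠ ⊤ := fun p =>
      ENNReal.mul_ne_top (ENNReal.rpow_ne_top_of_nonneg hε.le (havgt _ _ p.2.1)) (hV _ _ p.2.1)
    let X : ℝ≥0∞ := ⨆ p : P, (∫⁻ x in hc p.1.1 p.1.2, V x * min (V x) N ^ ε) / D p
    have hub : ∀ Y : ℝ≥0∞, (∀ (a : Fin d → ℝ) (r : ℝ), 0 < r → l ≤ avgE (hc a r) V →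
        ∫⁻ x in hc a r, V x * min (V x) N ^ ε ≤
          Y * (avgE (hc a r) V ^ ε * ∫⁻ x in hc a r, V x)) → X ≤ Y := by
      intro Y hY
      refine iSup_le fun p => ?_
      rw [ENNReal.div_le_iff (hD0 p) (hDt p)]
      exact hY _ _ p.2.1 p.2.2
    have hX : ∀ (a : Fin d → ℝ) (r : ℝ), 0 < r → l ≤ avgE (hc a r) V →
        ∫⁻ x in hc a r, V x * min (V x) N ^ ε ≤
          X * (avgE (hc a r) V ^ ε * ∫⁻ x in hc a r, V x) := by
      intro b s hs hls
      have := le_iSup (fun p : P => (∫⁻ x in hc p.1.1 p.1.2, V x * min (V x) N ^ ε) / D p)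
        ⟨(b, s), hs, hls⟩
      rwa [ENNReal.div_le_iff (hD0 _) (hDt _)] at this
    have hlε0 : l ^ ε ≠ 0 := by simp [ENNReal.rpow_eq_zero_iff, hl0, hε.le]
    have hlεt : l ^ ε ≠ ⊤ := ENNReal.rpow_ne_top_of_nonneg hε.le hlt
    have hXt : X ≠ ⊤ := by
      refine ne_top_of_le_ne_top (b := (N : ℝ≥0∞) ^ ε * (l ^ ε)⁻¹) ?_ (hub _ ?_)
      · exact ENNReal.mul_ne_top (ENNReal.rpow_ne_top_of_nonneg hε.le (by simp))
          (by simpa using hlε0)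
      · intro b s hs hls
        calc ∫⁻ x in hc b s, V x * min (V x) N ^ ε
            ≤ ∫⁻ x in hc b s, (N : ℝ≥0∞) ^ ε * V x := by
              refine lintegral_mono fun x => ?_
              rw [mul_comm]
              gcongr
              exact min_le_right _ _
          _ = (N : ℝ≥0∞) ^ ε * ∫⁻ x in hc b s, V x := lintegral_const_mul'' _ hVm.restrict
          _ = (N : ℝ≥0∞) ^ ε * (l ^ ε)⁻¹ * (l ^ ε * ∫⁻ x in hc b s, V x) := by
              rw [mul_assoc, ← mul_assoc (l ^ ε)⁻¹, ENNReal.inv_mul_cancel hlε0 hlεt, one_mul]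
          _ ≤ _ := by gcongr
    have hstep : X ≤ (α⁻¹) ^ ε + γ * X :=
      hub _ fun b s hs hls => step V hVm hV α β hα0 hα1 hA ε hε N l hl0 X hX b s hs hls
    refine (hX a r hr le_rfl).trans ?_
    gcongr
    exact absorb hXt hγ hstep
  have hlim : ∫⁻ x in hc a r, V x ^ (1 + ε) ≤
      (α⁻¹) ^ ε * (1 - γ)⁻¹ * (l ^ ε * ∫⁻ x in hc a r, V x) := by
    calc ∫⁻ x in hc a r, V x ^ (1 + ε)
        ≤ ∫⁻ x in hc a r, ⨆ N : ℕ, V x * min (V x) N ^ ε := by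
          refine lintegral_mono fun x => ?_
          obtain ⟨n, hn⟩ := ENNReal.exists_nat_gt (hVt x)
          refine le_trans (le_of_eq ?_) (le_iSup _ n)
          rw [min_eq_left hn.le, ENNReal.rpow_add_of_nonneg _ _ zero_le_one hε.le,
            ENNReal.rpow_one]
      _ = ⨆ N : ℕ, ∫⁻ x in hc a r, V x * min (V x) N ^ ε := by
          refine lintegral_iSup' ?_ ?_
          · intro N
            exact (hVm.mul ((hVm.min aemeasurable_const).pow_const ε)).restrict
          · refine Eventually.of_forall fun x M N hMN => ?_
            simp only
            gcongr
      _ ≤ _ := iSup_le hN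
  calc avgE (hc a r) (fun x => V x ^ (1 + ε))
      ≤ (volume (hc a r))⁻¹ * ((α⁻¹) ^ ε * (1 - γ)⁻¹ * (l ^ ε * ∫⁻ x in hc a r, V x)) := by
        unfold avgE; gcongr
    _ = (α⁻¹) ^ ε * (1 - γ)⁻¹ * (l ^ ε * l) := by
        nth_rewrite 3 [hl]
        unfold avgE; ring
    _ = _ := by
        rw [add_comm 1 ε, ENNReal.rpow_add_of_nonneg _ _ hε.le zero_le_one, ENNReal.rpow_one]

lemma avgE_hc {d : ℕ} (a : Fin d → ℝ) (r : ℝ) (g : (Fin d → ℝ) → ℝ≥0∞) :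
    avgE (Set.univ.pi fun i => Set.Icc (a i) (a i + r)) g = avgE (hc a r) g := by
  unfold avgE
  rw [measure_congr (hc_ae a r), setLIntegral_congr (hc_ae a r)]

/-- Openness of the reverse Hölder classes: if `w ∈ RH_q(ℝ^d)`,
`1 < q < ∞`, then `w ∈ RH_p(ℝ^d)` for some `q < p < ∞`. -/
theorem RH_openness (d : ℕ) (q : ℝ) (hq : 1 < q)
    (w : (Fin d → ℝ) → ℝ) (hw : MemRH q w) :
    ∃ p : ℝ, q < p ∧ MemRH p w := by
  obtain ⟨⟨hloc, hpos⟩, hRH⟩ := hw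
  have hq0 : 0 < q := by linarith
  let W : (Fin d → ℝ) → ℝ≥0∞ := fun x => oR (w x)
  have hWm : AEMeasurable W volume := hloc.aestronglyMeasurable.aemeasurable.ennreal_ofReal
  have hpow : ∀ (s : ℝ) (Q : Set (Fin d → ℝ)),
      avgE Q (fun x => oR (w x ^ s)) = avgE Q (fun x => W x ^ s) := by
    intro s Q
    unfold avgE
    congr 1
    refine lintegral_congr_ae (ae_restrict_of_ae ?_)
    filter_upwards [hpos] with x hx
    exact (ENNReal.ofReal_rpow_of_pos hx).symm
  have hI : ∀ (a : Fin d → ℝ) (r : ℝ), 0 < r → ∫⁻ x in hc a r, W x ≠ ⊤ := by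
    intro a r hr
    rw [setLIntegral_congr (hc_ae a r)]
    have hcomp : IsCompact (Set.univ.pi fun i => Set.Icc (a i) (a i + r)) :=
      isCompact_univ_pi fun i => isCompact_Icc
    have := (hloc.integrableOn_isCompact hcomp).lintegral_lt_top
    exact this.ne
  have hpos' : ∀ (s : ℝ) (a : Fin d → ℝ) (r : ℝ), 0 < r → ∫⁻ x in hc a r, W x ^ s ≠ 0 := by
    intro s a r hr h0
    rw [lintegral_eq_zero_iff' (hWm.pow_const s).restrict] at h0
    have h1 : ∀ᵐ x ∂(volume.restrict (hc a r)), False := by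
      filter_upwards [h0, ae_restrict_of_ae hpos] with x hx hx'
      have : W x ≠ 0 := by simpa [W, oR] using hx'
      have h2 : W x ≠ ⊤ := by simp [W, oR]
      simp [ENNReal.rpow_eq_zero_iff, this, h2] at hx
    rw [eventually_false_iff_eq_bot, ae_eq_bot, Measure.restrict_eq_zero] at h1
    exact hc_vol_ne_zero a hr h1
  have hW0 : ∀ (a : Fin d → ℝ) (r : ℝ), 0 < r → ∫⁻ x in hc a r, W x ≠ 0 := by
    intro a r hr
    simpa using hpos' 1 a r hr
  have hav0 : ∀ (a : Fin d → ℝ) (r : ℝ), 0 < r → avgE (hc a r) W ≠ 0 := fun a r hr =>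
    mul_ne_zero (by simpa using hc_vol_ne_top a r) (hW0 a r hr)
  have havt : ∀ (a : Fin d → ℝ) (r : ℝ), 0 < r → avgE (hc a r) W ≠ ⊤ := fun a r hr =>
    ENNReal.mul_ne_top (by simpa using hc_vol_ne_zero a hr) (hI a r hr)
  obtain ⟨C, hC1, hCt, hC⟩ : ∃ C : ℝ≥0∞, 1 ≤ C ∧ C ≠ ⊤ ∧ ∀ (a : Fin d → ℝ) (r : ℝ), 0 < r →
      (avgE (hc a r) fun x => W x ^ q) ^ (1 / q) ≤ C * avgE (hc a r) W := by
    refine ⟨max 1 (RHConst q w), le_max_left _ _, (max_lt (by simp) hRH).ne, ?_⟩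
    intro a r hr
    rw [← hpow, ← avgE_hc, ← avgE_hc, ← ENNReal.div_le_iff, div_eq_mul_inv]
    · refine le_trans ?_ (le_max_right _ _)
      exact le_iSup (fun Q : {S : Set (Fin d → ℝ) // IsCube S} =>
        (avgE Q.1 fun x => oR (w x ^ q)) ^ (1 / q) * (avgE Q.1 fun x => oR (w x))⁻¹)
        ⟨_, a, r, hr, rfl⟩
    · rw [avgE_hc]; exact hav0 a r hr
    · rw [avgE_hc]; exact havt a r hr
  have hV : ∀ (a : Fin d → ℝ) (r : ℝ), 0 < r → ∫⁻ x in hc a r, W x ^ q ≠ ⊤ := by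
    intro a r hr htop
    have := hC a r hr
    rw [avgE, htop, ENNReal.mul_top (by simpa using hc_vol_ne_top a r),
      ENNReal.top_rpow_of_pos (by positivity), top_le_iff] at this
    exact ENNReal.mul_ne_top hCt (havt a r hr) this
  obtain ⟨α, β, hα0, hα1, hβ, hA⟩ := ainf W hWm hq C hC1 hCt hI hV hC
  obtain ⟨ε, hε, K, hK, hG⟩ := gehring (fun x => W x ^ q) (hWm.pow_const q)
    (fun x => ENNReal.rpow_ne_top_of_nonneg hq0.le (by simp [W, oR])) hV
    (hpos' q) α β hα0 hα1 hβ hA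
  have hp0 : 0 < q * (1 + ε) := by positivity
  refine ⟨q * (1 + ε), by nlinarith, ⟨hloc, hpos⟩, ?_⟩
  refine lt_of_le_of_lt (b := K ^ (1 / (q * (1 + ε))) * C) (iSup_le ?_) ?_
  · rintro ⟨Q, a, r, hr, rfl⟩
    simp only
    rw [hpow, avgE_hc, avgE_hc, ← div_eq_mul_inv]
    refine (ENNReal.div_le_iff (hav0 a r hr) (havt a r hr)).2 ?_
    have h1 := ENNReal.rpow_le_rpow (hG a r hr) (z := 1 / (q * (1 + ε))) (by positivity)
    simp only [← ENNReal.rpow_mul] at h1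
    refine h1.trans ?_
    rw [ENNReal.mul_rpow_of_nonneg _ _ (by positivity), ← ENNReal.rpow_mul, mul_assoc]
    gcongr
    refine le_trans (le_of_eq ?_) (hC a r hr)
    congr 1
    field_simp
  · exact (ENNReal.mul_ne_top (ENNReal.rpow_ne_top_of_nonneg (by positivity) hK) hCt).lt_top
end
end

section
/- Let 1 ≤ p_- < p_+ < ∞, q_1 ∈ [p_-, p_+], q ∈ (p_-, p_+), and let w_1 ∈ A_{q_1/p_-}(ℝ^d) ∩ RH_{(p_+/q_1)'}(ℝ^d) and w ∈ A_{q/p_-}(ℝ^d) ∩ RH_{(p_+/q)'}(ℝ^d). Then there exist q_0 ∈ (p_-, p_+), a weight w_0 ∈ A_{q_0/p_-}(ℝ^d) ∩ RH_{(p_+/q_0)'}(ℝ^d), and θ ∈ (0,1) such that 1/q = (1-θ)/q_0 + θ/q_1 and w^{1/q} = w_0^{(1-θ)/q_0} w_1^{θ/q_1}. -/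
open MeasureTheory Filter Topology ENNReal NNReal
noncomputable section

namespace LRI

/-- half-open cube -/
def hc {d : ℕ} (a : Fin d → ℝ) (r : ℝ) : Set (Fin d → ℝ) :=
  Set.univ.pi fun i => Set.Ico (a i) (a i + r)

/-- corner of a dyadic child -/
def ch {d : ℕ} (a : Fin d → ℝ) (r : ℝ) (c : Fin d → Bool) : Fin d → ℝ :=
  fun i => a i + if c i then r / 2 else 0

theorem hc_meas {d : ℕ} (a : Fin d → ℝ) (r : ℝ) : MeasurableSet (hc a r) :=
  MeasurableSet.univ_pi fun _ => measurableSet_Ico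

theorem hc_vol {d : ℕ} (a : Fin d → ℝ) (r : ℝ) : volume (hc a r) = ENNReal.ofReal r ^ d := by
  unfold hc
  rw [Real.volume_pi_Ico]
  simp

theorem hc_vol_ne_zero {d : ℕ} (a : Fin d → ℝ) {r : ℝ} (hr : 0 < r) : volume (hc a r) ≠ 0 := by
  rw [hc_vol]
  exact pow_ne_zero _ (by simpa using hr)

theorem hc_vol_ne_top {d : ℕ} (a : Fin d → ℝ) (r : ℝ) : volume (hc a r) ≠ ⊤ := by
  rw [hc_vol]
  exact ENNReal.pow_ne_top ENNReal.ofReal_ne_top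

theorem hc_child_vol {d : ℕ} (a b : Fin d → ℝ) (r : ℝ) :
    volume (hc a r) = 2 ^ d * volume (hc b (r / 2)) := by
  rw [hc_vol, hc_vol, ← mul_pow]
  congr 1
  rw [show (2 : ℝ≥0∞) = ENNReal.ofReal 2 by simp, ← ENNReal.ofReal_mul (by norm_num)]
  congr 1
  ring

theorem child_sub {d : ℕ} (a : Fin d → ℝ) {r : ℝ} (hr : 0 < r) (c : Fin d → Bool) :
    hc (ch a r c) (r / 2) ⊆ hc a r := by
  intro x hx i _
  have := hx i trivial
  simp only [ch, Set.mem_Ico] at this ⊢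
  split_ifs at this <;> constructor <;> linarith [this.1, this.2]

theorem hc_eq {d : ℕ} (a : Fin d → ℝ) {r : ℝ} (hr : 0 < r) :
    hc a r = ⋃ c, hc (ch a r c) (r / 2) := by
  apply Set.Subset.antisymm
  · intro x hx
    rw [Set.mem_iUnion]
    refine ⟨fun i => decide (a i + r / 2 ≤ x i), fun i _ => ?_⟩
    have := hx i trivial
    simp only [ch, Set.mem_Ico, decide_eq_true_eq] at this ⊢
    split_ifs with h <;> constructor <;> linarith [this.1, this.2]
  · exact Set.iUnion_subset fun c => child_sub a hr c

theorem hc_disj {d : ℕ} (a : Fin d → ℝ) (r : ℝ) :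
    Pairwise (Function.onFun Disjoint fun c => hc (ch a r c) (r / 2)) := by
  intro c c' hcc
  rw [Function.onFun, Set.disjoint_left]
  intro x hx hx'
  apply hcc
  funext i
  have h1 := hx i trivial
  have h2 := hx' i trivial
  simp only [ch, Set.mem_Ico] at h1 h2
  cases h : c i <;> cases h' : c' i <;> simp [h, h'] at h1 h2 ⊢ <;> linarith [h1.1, h1.2, h2.1, h2.2]

theorem lint_hc {d : ℕ} (a : Fin d → ℝ) {r : ℝ} (hr : 0 < r) (f : (Fin d → ℝ) → ℝ≥0∞) :
    ∫⁻ x in hc a r, f x = ∑ c, ∫⁻ x in hc (ch a r c) (r / 2), f x := by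
  conv_lhs => rw [hc_eq a hr]
  rw [lintegral_iUnion (fun c => hc_meas _ _) (hc_disj a r), tsum_fintype]

/-- average over half-open cube -/
def av {d : ℕ} (u : (Fin d → ℝ) → ℝ≥0∞) (a : Fin d → ℝ) (r : ℝ) : ℝ≥0∞ :=
  (volume (hc a r))⁻¹ * ∫⁻ x in hc a r, u x

theorem av_mul {d : ℕ} (u : (Fin d → ℝ) → ℝ≥0∞) (a : Fin d → ℝ) {r : ℝ} (hr : 0 < r) :
    volume (hc a r) * av u a r = ∫⁻ x in hc a r, u x := by
  unfold av
  rw [← mul_assoc, ENNReal.mul_inv_cancel (hc_vol_ne_zero a hr) (hc_vol_ne_top a r), one_mul]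

theorem av_child {d : ℕ} (u : (Fin d → ℝ) → ℝ≥0∞) (a : Fin d → ℝ) {r : ℝ} (hr : 0 < r)
    (c : Fin d → Bool) : av u (ch a r c) (r / 2) ≤ 2 ^ d * av u a r := by
  unfold av
  rw [hc_child_vol a (ch a r c) r, ENNReal.mul_inv (by simp) (by simp), ← mul_assoc, ← mul_assoc,
    ENNReal.mul_inv_cancel (by simp) (by simp), one_mul]
  gcongr
  exact child_sub a hr c

/-- dyadic conditional expectation -/
def G {d : ℕ} (u : (Fin d → ℝ) → ℝ≥0∞) : ℕ → (Fin d → ℝ) → ℝ → (Fin d → ℝ) → ℝ≥0∞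
  | 0, a, r, _ => av u a r
  | n + 1, a, r, x => ∑ c, (hc (ch a r c) (r / 2)).indicator (G u n (ch a r c) (r / 2)) x

theorem G_meas {d : ℕ} (u : (Fin d → ℝ) → ℝ≥0∞) (n : ℕ) : ∀ a r, Measurable (G u n a r) := by
  induction n with
  | zero => intro a r; exact measurable_const
  | succ n ih =>
    intro a r
    show Measurable fun x => ∑ c, (hc (ch a r c) (r / 2)).indicator (G u n (ch a r c) (r / 2)) x
    exact Finset.measurable_sum _ fun c _ => (ih _ _).indicator (hc_meas _ _)

theorem G_child {d : ℕ} (u : (Fin d → ℝ) → ℝ≥0∞) (n : ℕ) (a : Fin d → ℝ) (r : ℝ)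
    (c : Fin d → Bool) (x : Fin d → ℝ) (hx : x ∈ hc (ch a r c) (r / 2)) :
    G u (n + 1) a r x = G u n (ch a r c) (r / 2) x := by
  show ∑ c, (hc (ch a r c) (r / 2)).indicator (G u n (ch a r c) (r / 2)) x = _
  rw [Finset.sum_eq_single c]
  · rw [Set.indicator_of_mem hx]
  · intro c' _ hne
    rw [Set.indicator_of_notMem]
    exact fun h => Set.disjoint_left.1 (hc_disj a r hne) h hx
  · simp

/-- the function `G` is an average over a small subcube -/
theorem G_eq {d : ℕ} (u : (Fin d → ℝ) → ℝ≥0∞) (n : ℕ) : ∀ (a : Fin d → ℝ) (r : ℝ), 0 < r →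
    ∀ x ∈ hc a r, ∃ b, x ∈ hc b (r / 2 ^ n) ∧ hc b (r / 2 ^ n) ⊆ hc a r ∧
      G u n a r x = av u b (r / 2 ^ n) := by
  induction n with
  | zero => intro a r hr x hx; exact ⟨a, by simpa using hx, by simp, by simp [G]⟩
  | succ n ih =>
    intro a r hr x hx
    have hx' := hx
    rw [hc_eq a hr, Set.mem_iUnion] at hx'
    obtain ⟨c, hxc⟩ := hx'
    obtain ⟨b, h1, h2, h3⟩ := ih (ch a r c) (r / 2) (by linarith) x hxc
    have e : r / 2 / 2 ^ n = r / 2 ^ (n + 1) := by rw [pow_succ]; field_simp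
    rw [e] at h1 h2 h3
    exact ⟨b, h1, h2.trans (child_sub a hr c), by rw [G_child u n a r c x hxc, h3]⟩

/-- stopped set -/
def St {d : ℕ} (u : (Fin d → ℝ) → ℝ≥0∞) (l : ℝ≥0∞) : ℕ → (Fin d → ℝ) → ℝ → Set (Fin d → ℝ)
  | 0, _, _ => ∅
  | n + 1, a, r => ⋃ c, {x | (l < av u (ch a r c) (r / 2) ∧ x ∈ hc (ch a r c) (r / 2)) ∨
      (¬ l < av u (ch a r c) (r / 2) ∧ x ∈ St u l n (ch a r c) (r / 2))}

/-- piece of the stopped set -/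
def Sp {d : ℕ} (u : (Fin d → ℝ) → ℝ≥0∞) (l : ℝ≥0∞) (n : ℕ) (a : Fin d → ℝ) (r : ℝ)
    (c : Fin d → Bool) : Set (Fin d → ℝ) :=
  {x | (l < av u (ch a r c) (r / 2) ∧ x ∈ hc (ch a r c) (r / 2)) ∨
      (¬ l < av u (ch a r c) (r / 2) ∧ x ∈ St u l n (ch a r c) (r / 2))}

theorem Sp_pos {d : ℕ} (u : (Fin d → ℝ) → ℝ≥0∞) (l : ℝ≥0∞) (n : ℕ) (a : Fin d → ℝ) (r : ℝ)
    (c : Fin d → Bool) (h : l < av u (ch a r c) (r / 2)) :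
    Sp u l n a r c = hc (ch a r c) (r / 2) := by
  ext x; simp [Sp, h]

theorem Sp_neg {d : ℕ} (u : (Fin d → ℝ) → ℝ≥0∞) (l : ℝ≥0∞) (n : ℕ) (a : Fin d → ℝ) (r : ℝ)
    (c : Fin d → Bool) (h : ¬ l < av u (ch a r c) (r / 2)) :
    Sp u l n a r c = St u l n (ch a r c) (r / 2) := by
  ext x; simp only [Sp, h, not_false_eq_true, false_and, true_and, false_or, Set.ofPred_mem_eq]

theorem St_succ {d : ℕ} (u : (Fin d → ℝ) → ℝ≥0∞) (l : ℝ≥0∞) (n : ℕ) (a : Fin d → ℝ) (r : ℝ) :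
    St u l (n + 1) a r = ⋃ c, Sp u l n a r c := rfl

theorem St_basic {d : ℕ} (u : (Fin d → ℝ) → ℝ≥0∞) (l : ℝ≥0∞) (n : ℕ) :
    ∀ (a : Fin d → ℝ) (r : ℝ), 0 < r → MeasurableSet (St u l n a r) ∧ St u l n a r ⊆ hc a r := by
  induction n with
  | zero => intro a r _; exact ⟨MeasurableSet.empty, Set.empty_subset _⟩
  | succ n ih =>
    intro a r hr
    rw [St_succ]
    constructor
    · refine MeasurableSet.iUnion fun c => ?_
      by_cases h : l < av u (ch a r c) (r / 2)
      · rw [Sp_pos _ _ _ _ _ _ h]; exact hc_meas _ _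
      · rw [Sp_neg _ _ _ _ _ _ h]; exact (ih _ _ (by linarith)).1
    · refine Set.iUnion_subset fun c => ?_
      refine Set.Subset.trans ?_ (child_sub a hr c)
      by_cases h : l < av u (ch a r c) (r / 2)
      · rw [Sp_pos _ _ _ _ _ _ h]
      · rw [Sp_neg _ _ _ _ _ _ h]; exact (ih _ _ (by linarith)).2

theorem Sp_basic {d : ℕ} (u : (Fin d → ℝ) → ℝ≥0∞) (l : ℝ≥0∞) (n : ℕ)
    (a : Fin d → ℝ) (r : ℝ) (hr : 0 < r) (c : Fin d → Bool) :
    MeasurableSet (Sp u l n a r c) ∧ Sp u l n a r c ⊆ hc (ch a r c) (r / 2) := by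
  by_cases h : l < av u (ch a r c) (r / 2)
  · rw [Sp_pos _ _ _ _ _ _ h]; exact ⟨hc_meas _ _, le_rfl⟩
  · rw [Sp_neg _ _ _ _ _ _ h]; exact St_basic u l n _ _ (by linarith)

theorem St_lint {d : ℕ} (u f : (Fin d → ℝ) → ℝ≥0∞) (l : ℝ≥0∞) (n : ℕ)
    (a : Fin d → ℝ) (r : ℝ) (hr : 0 < r) :
    ∫⁻ x in St u l (n + 1) a r, f x = ∑ c, ∫⁻ x in Sp u l n a r c, f x := by
  rw [St_succ, lintegral_iUnion (fun c => (Sp_basic u l n a r hr c).1) _, tsum_fintype]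
  intro c c' h
  exact (hc_disj a r h).mono (Sp_basic u l n a r hr c).2 (Sp_basic u l n a r hr c').2

theorem St_weak {d : ℕ} (u : (Fin d → ℝ) → ℝ≥0∞) (l : ℝ≥0∞) (n : ℕ) :
    ∀ (a : Fin d → ℝ) (r : ℝ), 0 < r →
      l * volume (St u l n a r) ≤ ∫⁻ x in St u l n a r, u x := by
  induction n with
  | zero => intro a r _; simp [St]
  | succ n ih =>
    intro a r hr
    have h1 : volume (St u l (n + 1) a r) = ∑ c, volume (Sp u l n a r c) := by
      have := St_lint u (fun _ => 1) l n a r hr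
      simpa using this
    rw [h1, St_lint u u l n a r hr, Finset.mul_sum]
    refine Finset.sum_le_sum fun c _ => ?_
    by_cases h : l < av u (ch a r c) (r / 2)
    · rw [Sp_pos _ _ _ _ _ _ h, ← av_mul u (ch a r c) (by linarith : 0 < r / 2), mul_comm]
      gcongr
    · rw [Sp_neg _ _ _ _ _ _ h]; exact ih _ _ (by linarith)

theorem claim {d : ℕ} (u : (Fin d → ℝ) → ℝ≥0∞) (l K : ℝ≥0∞) (ε : ℝ) (hε : 0 < ε) (n : ℕ)
    (IH : ∀ m < n, ∀ (a : Fin d → ℝ) (r : ℝ), 0 < r →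
      ∫⁻ x in hc a r, G u m a r x ^ (1 + ε) ≤ K * (∫⁻ x in hc a r, u x) * av u a r ^ ε) :
    ∀ m ≤ n, ∀ (a : Fin d → ℝ) (r : ℝ), 0 < r → av u a r ≤ l →
      ∫⁻ x in hc a r, G u m a r x ^ (1 + ε) ≤
        l ^ ε * (∫⁻ x in hc a r, u x) + K * (2 ^ d * l) ^ ε * ∫⁻ x in St u l m a r, u x := by
  intro m
  induction m with
  | zero =>
    intro _ a r hr hl
    refine le_trans ?_ le_self_add
    simp only [G, lintegral_const, Measure.restrict_apply MeasurableSet.univ, Set.univ_inter]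
    rw [ENNReal.rpow_add_of_nonneg _ _ zero_le_one hε.le, ENNReal.rpow_one,
      mul_assoc, mul_comm, mul_assoc, av_mul u a hr]
    gcongr
  | succ m ih =>
    intro hm a r hr hl
    rw [lint_hc a hr, lint_hc a hr, St_lint u u l m a r hr, Finset.mul_sum, Finset.mul_sum,
      ← Finset.sum_add_distrib]
    refine Finset.sum_le_sum fun c _ => ?_
    have hr2 : 0 < r / 2 := by linarith
    have e : ∫⁻ x in hc (ch a r c) (r / 2), G u (m + 1) a r x ^ (1 + ε) =
        ∫⁻ x in hc (ch a r c) (r / 2), G u m (ch a r c) (r / 2) x ^ (1 + ε) := by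
      refine setLIntegral_congr_fun (hc_meas _ _) fun x hx => ?_
      show _ = _
      rw [G_child u m a r c x hx]
    rw [e]
    by_cases h : l < av u (ch a r c) (r / 2)
    · rw [Sp_pos _ _ _ _ _ _ h]
      refine le_trans ?_ le_add_self
      refine (IH m (by omega) _ _ hr2).trans ?_
      rw [mul_assoc, mul_assoc, mul_comm (lintegral _ _)]
      gcongr
      exact (av_child u a hr c).trans (by gcongr)
    · rw [Sp_neg _ _ _ _ _ _ h]
      exact ih (by omega) _ _ hr2 (not_lt.1 h)

theorem dyadic_RH {d : ℕ} (u : (Fin d → ℝ) → ℝ≥0∞) (K β : ℝ≥0∞) (ε : ℝ) (hε : 0 < ε)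
    (hfin : ∀ (a : Fin d → ℝ) (r : ℝ), 0 < r → ∫⁻ x in hc a r, u x ≠ ⊤)
    (hpos : ∀ (a : Fin d → ℝ) (r : ℝ), 0 < r → ∫⁻ x in hc a r, u x ≠ 0)
    (H : ∀ (a : Fin d → ℝ) (r : ℝ), 0 < r → ∀ S, MeasurableSet S → S ⊆ hc a r →
      2 * volume S ≤ volume (hc a r) → ∫⁻ x in S, u x ≤ β * ∫⁻ x in hc a r, u x)
    (hK : 2 ^ ε + K * (2 ^ d * 2) ^ ε * β ≤ K) (n : ℕ) :
    ∀ (a : Fin d → ℝ) (r : ℝ), 0 < r →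
      ∫⁻ x in hc a r, G u n a r x ^ (1 + ε) ≤ K * (∫⁻ x in hc a r, u x) * av u a r ^ ε := by
  induction n using Nat.strong_induction_on with
  | _ n IH =>
    intro a r hr
    have hav0 : av u a r ≠ 0 := by
      unfold av
      exact mul_ne_zero (ENNReal.inv_ne_zero.2 (hc_vol_ne_top a r)) (hpos a r hr)
    have havt : av u a r ≠ ⊤ := by
      unfold av
      exact ENNReal.mul_ne_top (ENNReal.inv_ne_top.2 (hc_vol_ne_zero a hr)) (hfin a r hr)
    have h1 := claim u (2 * av u a r) K ε hε n IH n le_rfl a r hr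
      (by rw [two_mul]; exact le_self_add)
    obtain ⟨hm, hs⟩ := St_basic u (2 * av u a r) n a r hr
    have h2 : 2 * volume (St u (2 * av u a r) n a r) ≤ volume (hc a r) := by
      have h3 := St_weak u (2 * av u a r) n a r hr
      have h4 : ∫⁻ x in St u (2 * av u a r) n a r, u x ≤ ∫⁻ x in hc a r, u x :=
        lintegral_mono_set hs
      rw [← av_mul u a hr] at h4
      have h5 := h3.trans h4
      rw [mul_comm (volume _) (av u a r), mul_comm 2 (av u a r)] at h5
      rw [mul_comm 2 (av u a r)]
      rw [mul_assoc] at h5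
      exact (ENNReal.mul_le_mul_iff_right hav0 havt).1 h5
    have h6 := H a r hr _ hm hs h2
    refine h1.trans ?_
    calc _ ≤ (2 * av u a r) ^ ε * (∫⁻ x in hc a r, u x) + K * (2 ^ d * (2 * av u a r)) ^ ε *
          (β * ∫⁻ x in hc a r, u x) := by gcongr
      _ = (2 ^ ε + K * (2 ^ d * 2) ^ ε * β) * (∫⁻ x in hc a r, u x) * av u a r ^ ε := by
        rw [← mul_assoc (2 ^ d), ENNReal.mul_rpow_of_nonneg _ _ hε.le,
          ENNReal.mul_rpow_of_nonneg _ (av u a r) hε.le]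
        ring
      _ ≤ _ := by gcongr

theorem hc_ae_Icc {d : ℕ} (a : Fin d → ℝ) (r : ℝ) :
    hc a r =ᵐ[volume] Set.univ.pi fun i => Set.Icc (a i) (a i + r) :=
  Measure.pi_Ico_ae_eq_pi_Icc

theorem hc_ae {d : ℕ} (a : Fin d → ℝ) {r : ℝ} (hr : 0 < r) :
    hc a r =ᵐ[volume] Metric.closedBall (fun i => a i + r / 2) (r / 2) := by
  rw [closedBall_pi _ (by linarith)]
  refine (hc_ae_Icc a r).trans (Eq.eventuallyEq ?_)
  congr 1
  funext i
  rw [Real.closedBall_eq_Icc]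
  congr 1 <;> ring

theorem tendsto_G {d : ℕ} (u : (Fin d → ℝ) → ℝ≥0∞) (hu : AEMeasurable u volume)
    (a : Fin d → ℝ) (r : ℝ) (hr : 0 < r) (hfin : ∫⁻ x in hc a r, u x ≠ ⊤) :
    ∀ᵐ x ∂(volume.restrict (hc a r)), Tendsto (fun n => G u n a r x) atTop (𝓝 (u x)) := by
  rw [ae_restrict_iff' (hc_meas a r)]
  have hf : AEMeasurable ((hc a r).indicator u) volume := hu.indicator (hc_meas a r)
  have hf2 : ∫⁻ x, (hc a r).indicator u x ≠ ⊤ := by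
    rwa [lintegral_indicator (hc_meas a r)]
  filter_upwards [(IsUnifLocDoublingMeasure.vitaliFamily
    (volume : Measure (Fin d → ℝ)) 1).ae_tendsto_lintegral_div hf hf2] with x hx hxa
  rw [Set.indicator_of_mem hxa] at hx
  choose b hb1 hb2 hb3 using fun n => G_eq u n a r hr x hxa
  have hδ : ∀ n : ℕ, 0 < r / 2 ^ n := fun n => by positivity
  have ht := IsUnifLocDoublingMeasure.tendsto_closedBall_filterAt
    (volume : Measure (Fin d → ℝ)) (K := 1) (x := x) (l := atTop)
    (fun n => fun i => b n i + r / 2 ^ n / 2) (fun n : ℕ => r / 2 ^ n / 2) ?_ ?_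
  · refine (hx.comp ht).congr fun n => ?_
    simp only [Function.comp]
    rw [hb3 n, av, ← setLIntegral_congr (hc_ae (b n) (hδ n)), ← measure_congr (hc_ae (b n) (hδ n)),
      ENNReal.div_eq_inv_mul]
    congr 1
    refine setLIntegral_congr_fun (hc_meas _ _) fun y hy => ?_
    exact Set.indicator_of_mem (hb2 n hy) u
  · rw [tendsto_nhdsWithin_iff]
    constructor
    · have h1 : Tendsto (fun n : ℕ => r / 2 * (1 / 2 : ℝ) ^ n) atTop (𝓝 (r / 2 * 0)) :=
        (_root_.tendsto_pow_atTop_nhds_zero_of_lt_one (by norm_num) (by norm_num)).const_mul _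
      rw [mul_zero] at h1
      refine h1.congr fun n => ?_
      rw [div_pow, one_pow]
      field_simp
    · exact Eventually.of_forall fun n => by simpa using hr
  · refine Eventually.of_forall fun n => ?_
    rw [one_mul, closedBall_pi _ (by have := hδ n; linarith)]
    intro i _
    have := hb1 n i trivial
    show x i ∈ Metric.closedBall (b n i + r / 2 ^ n / 2) (r / 2 ^ n / 2)
    rw [Real.closedBall_eq_Icc]
    constructor <;> linarith [this.1, this.2]

theorem full_RH {d : ℕ} (u : (Fin d → ℝ) → ℝ≥0∞) (hu : AEMeasurable u volume)
    (K β : ℝ≥0∞) (ε : ℝ) (hε : 0 < ε)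
    (hfin : ∀ (a : Fin d → ℝ) (r : ℝ), 0 < r → ∫⁻ x in hc a r, u x ≠ ⊤)
    (hpos : ∀ (a : Fin d → ℝ) (r : ℝ), 0 < r → ∫⁻ x in hc a r, u x ≠ 0)
    (H : ∀ (a : Fin d → ℝ) (r : ℝ), 0 < r → ∀ S, MeasurableSet S → S ⊆ hc a r →
      2 * volume S ≤ volume (hc a r) → ∫⁻ x in S, u x ≤ β * ∫⁻ x in hc a r, u x)
    (hK : 2 ^ ε + K * (2 ^ d * 2) ^ ε * β ≤ K) (a : Fin d → ℝ) (r : ℝ) (hr : 0 < r) :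
      ∫⁻ x in hc a r, u x ^ (1 + ε) ≤ K * (∫⁻ x in hc a r, u x) * av u a r ^ ε := by
  have h1 : ∫⁻ x in hc a r, u x ^ (1 + ε) =
      ∫⁻ x in hc a r, liminf (fun n => G u n a r x ^ (1 + ε)) atTop := by
    refine lintegral_congr_ae ?_
    filter_upwards [tendsto_G u hu a r hr (hfin a r hr)] with x hx
    exact ((hx.ennrpow_const (1 + ε)).liminf_eq).symm
  rw [h1]
  refine (lintegral_liminf_le fun n => (G_meas u n a r).pow_const _).trans ?_
  refine liminf_le_of_le (by isBoundedDefault) fun b hb => ?_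
  obtain ⟨n, hn⟩ := hb.exists
  exact hn.trans (dyadic_RH u K β ε hε hfin hpos H hK n a r hr)

theorem avgE_eq {d : ℕ} (Q : Set (Fin d → ℝ)) (g : (Fin d → ℝ) → ℝ≥0∞) :
    avgE Q g = ∫⁻ x, g x ∂((volume Q)⁻¹ • volume.restrict Q) := by
  rw [lintegral_smul_measure]; rfl

theorem nu_prob {d : ℕ} (x : Fin d → ℝ) {r : ℝ} (hr : 0 < r) :
    IsProbabilityMeasure ((volume (hc x r))⁻¹ • volume.restrict (hc x r)) := by
  constructor
  simp [ENNReal.inv_mul_cancel (hc_vol_ne_zero x hr) (hc_vol_ne_top x r)]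

theorem nu_ac {d : ℕ} (Q : Set (Fin d → ℝ)) :
    ((volume Q)⁻¹ • volume.restrict Q) ≪ (volume : Measure (Fin d → ℝ)) :=
  (Measure.smul_absolutelyContinuous).trans Measure.restrict_le_self.absolutelyContinuous

/-- normalized `L^a` norm on `Q` -/
def N {d : ℕ} (Q : Set (Fin d → ℝ)) (f : (Fin d → ℝ) → ℝ≥0∞) (a : ℝ) : ℝ≥0∞ :=
  (avgE Q fun x => f x ^ a) ^ (1 / a)

theorem avgE_congr {d : ℕ} (Q : Set (Fin d → ℝ)) {f g : (Fin d → ℝ) → ℝ≥0∞}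
    (h : f =ᵐ[volume] g) : avgE Q f = avgE Q g := by
  rw [avgE_eq, avgE_eq]
  exact lintegral_congr_ae ((nu_ac Q).ae_le h)

theorem N_congr {d : ℕ} (Q : Set (Fin d → ℝ)) {f g : (Fin d → ℝ) → ℝ≥0∞} (a : ℝ)
    (h : f =ᵐ[volume] g) : N Q f a = N Q g a := by
  unfold N
  congr 1
  apply avgE_congr
  filter_upwards [h] with x hx
  rw [hx]

theorem N_mono {d : ℕ} (x : Fin d → ℝ) {r : ℝ} (hr : 0 < r) {f : (Fin d → ℝ) → ℝ≥0∞}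
    (hf : AEMeasurable f volume) {a b : ℝ} (ha : 0 < a) (hab : a ≤ b) :
    N (hc x r) f a ≤ N (hc x r) f b := by
  have := nu_prob x hr
  have h := eLpNorm'_le_eLpNorm'_of_exponent_le (f := f) ha hab
    ((volume (hc x r))⁻¹ • volume.restrict (hc x r))
    ((hf.mono_ac (nu_ac _)).aestronglyMeasurable)
  unfold N
  rw [avgE_eq, avgE_eq]
  simpa [eLpNorm'] using h

theorem N_mul {d : ℕ} (x : Fin d → ℝ) {r : ℝ} (hr : 0 < r) {f g : (Fin d → ℝ) → ℝ≥0∞}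
    (hf : AEMeasurable f volume) (hg : AEMeasurable g volume) {a b c : ℝ}
    (ha : 0 < a) (hb : 0 < b) (hcc : 0 < c) (h : 1 / a + 1 / b ≤ 1 / c) :
    N (hc x r) (fun y => f y * g y) c ≤ N (hc x r) f a * N (hc x r) g b := by
  have hs : 0 < 1 / a + 1 / b := by positivity
  have h0 : 0 < 1 / (1 / a + 1 / b) := by positivity
  refine (N_mono x hr (hf.mul hg) hcc (b := 1 / (1 / a + 1 / b)) ?_).trans ?_
  · rw [le_div_iff₀ hs]
    calc c * (1 / a + 1 / b) ≤ c * (1 / c) := by gcongr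
      _ = 1 := by field_simp
  · unfold N
    rw [avgE_eq, avgE_eq, avgE_eq]
    refine ENNReal.lintegral_Lp_mul_le_Lq_mul_Lr h0 ?_ ?_ _ (hf.mono_ac (nu_ac _))
      (hg.mono_ac (nu_ac _))
    · rw [div_lt_iff₀ hs]
      have : 0 < a * (1 / b) := by positivity
      have : a * (1 / a) = 1 := by field_simp
      linarith
    · rw [one_div_one_div]

theorem N_rpow {d : ℕ} (Q : Set (Fin d → ℝ)) (f : (Fin d → ℝ) → ℝ≥0∞) {s a : ℝ}
    (hs : 0 < s) (ha : 0 < a) : N Q (fun y => f y ^ s) a = N Q f (s * a) ^ s := by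
  unfold N
  rw [← ENNReal.rpow_mul]
  congr 2
  · funext x; rw [ENNReal.rpow_mul]
  · field_simp

/-- basic regularity -/
def IsW {d : ℕ} (v : (Fin d → ℝ) → ℝ≥0∞) : Prop :=
  AEMeasurable v volume ∧ ∀ᵐ x ∂(volume : Measure (Fin d → ℝ)), v x ≠ 0 ∧ v x ≠ ⊤

theorem IsW.rpow {d : ℕ} {v : (Fin d → ℝ) → ℝ≥0∞} (h : IsW v) (s : ℝ) :
    IsW fun x => v x ^ s := by
  refine ⟨h.1.pow_const s, ?_⟩
  filter_upwards [h.2] with x hx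
  constructor
  · simp [ENNReal.rpow_eq_zero_iff, hx.1, hx.2]
  · simp [ENNReal.rpow_eq_top_iff, hx.1, hx.2]

theorem IsW.inv {d : ℕ} {v : (Fin d → ℝ) → ℝ≥0∞} (h : IsW v) :
    IsW fun x => (v x)⁻¹ := by
  refine ⟨h.1.inv, ?_⟩
  filter_upwards [h.2] with x hx
  simp [hx.1, hx.2]

theorem IsW.avg_ne_zero {d : ℕ} {v : (Fin d → ℝ) → ℝ≥0∞} (h : IsW v) (x : Fin d → ℝ) {r : ℝ}
    (hr : 0 < r) : avgE (hc x r) v ≠ 0 := by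
  have := nu_prob x hr
  rw [avgE_eq]
  intro h0
  rw [lintegral_eq_zero_iff' (h.1.mono_ac (nu_ac _))] at h0
  have h1 := (nu_ac (hc x r)).ae_le h.2
  have : ∀ᵐ y ∂((volume (hc x r))⁻¹ • volume.restrict (hc x r)), False := by
    filter_upwards [h0, h1] with y hy hy'
    exact hy'.1 hy
  simpa using this.exists

theorem IsW.N_ne_zero {d : ℕ} {v : (Fin d → ℝ) → ℝ≥0∞} (h : IsW v) (x : Fin d → ℝ) {r : ℝ}
    (hr : 0 < r) {a : ℝ} (ha : 0 < a) : N (hc x r) v a ≠ 0 := by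
  unfold N
  rw [Ne, ENNReal.rpow_eq_zero_iff_of_pos (by positivity)]
  exact (h.rpow a).avg_ne_zero x hr

/-- Joint Muckenhoupt condition. -/
def Muck {d : ℕ} (a b : ℝ) (v : (Fin d → ℝ) → ℝ≥0∞) : Prop :=
  ∃ C : ℝ≥0, ∀ (x : Fin d → ℝ) (r : ℝ), 0 < r →
    N (hc x r) v a * N (hc x r) (fun y => (v y)⁻¹) b ≤ C

theorem Muck.symm {d : ℕ} {a b : ℝ} {v : (Fin d → ℝ) → ℝ≥0∞} (h : Muck a b v) :
    Muck b a fun y => (v y)⁻¹ := by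
  obtain ⟨C, hC⟩ := h
  refine ⟨C, fun x r hr => ?_⟩
  simp only [inv_inv]
  rw [mul_comm]
  exact hC x r hr

theorem Muck.rpow {d : ℕ} {a b : ℝ} {v : (Fin d → ℝ) → ℝ≥0∞} (h : Muck a b v) (ha : 0 < a)
    (hb : 0 < b) {s : ℝ} (hs : 0 < s) : Muck (a / s) (b / s) fun y => v y ^ s := by
  obtain ⟨C, hC⟩ := h
  refine ⟨C ^ s, fun x r hr => ?_⟩
  have e : (fun y => (v y ^ s)⁻¹) = fun y => (v y)⁻¹ ^ s := by
    funext y; rw [ENNReal.inv_rpow]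
  rw [e, N_rpow _ _ hs (by positivity), N_rpow _ _ hs (by positivity),
    mul_div_cancel₀ _ hs.ne', mul_div_cancel₀ _ hs.ne', ← ENNReal.mul_rpow_of_nonneg _ _ hs.le,
    ENNReal.coe_rpow_of_nonneg _ hs.le]
  gcongr
  exact hC x r hr

theorem Muck.N_ne_top {d : ℕ} {a b : ℝ} {v : (Fin d → ℝ) → ℝ≥0∞} (h : Muck a b v) (hv : IsW v)
    (hb : 0 < b) (x : Fin d → ℝ) {r : ℝ} (hr : 0 < r) : N (hc x r) v a ≠ ⊤ := by
  obtain ⟨C, hC⟩ := h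
  intro h
  have := hC x r hr
  rw [h, ENNReal.top_mul (hv.inv.N_ne_zero x hr hb)] at this
  simp at this

theorem Muck.lint_ne_top {d : ℕ} {a b : ℝ} {v : (Fin d → ℝ) → ℝ≥0∞} (h : Muck a b v) (hv : IsW v)
    (ha : 0 < a) (hb : 0 < b) (x : Fin d → ℝ) {r : ℝ} (hr : 0 < r) :
    ∫⁻ y in hc x r, v y ^ a ≠ ⊤ := by
  have h1 := h.N_ne_top hv hb x hr
  intro h2
  apply h1
  unfold N avgE
  rw [h2, ENNReal.mul_top (ENNReal.inv_ne_zero.2 (hc_vol_ne_top x r)), ENNReal.top_rpow_of_pos]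
  positivity

theorem Muck.A_inf {d : ℕ} {a b : ℝ} {v : (Fin d → ℝ) → ℝ≥0∞} (h : Muck a b v) (hv : IsW v)
    (ha : 0 < a) (hb : 0 < b) : ∃ D : ℝ≥0, ∀ (x : Fin d → ℝ) (r : ℝ), 0 < r → ∀ S,
      MeasurableSet S → S ⊆ hc x r → 2 * volume S ≤ volume (hc x r) →
      ∫⁻ y in hc x r, v y ^ a ≤ D * ∫⁻ y in hc x r \ S, v y ^ a := by
  have h' := h
  obtain ⟨C, hC⟩ := h
  set c : ℝ := 1 / (1 / a + 1 / b) with hcdef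
  have hc0 : 0 < c := by positivity
  refine ⟨(C * 2 ^ (1 / c)) ^ a, fun x r hr S hS hsub hvol => ?_⟩
  set T := hc x r \ S with hT
  have hTm : MeasurableSet T := (hc_meas x r).diff hS
  have hTsub : T ⊆ hc x r := Set.sdiff_subset
  have hvolT : volume (hc x r) ≤ 2 * volume T := by
    have h1 : volume S + volume T = volume (hc x r) := by
      rw [hT, ← measure_inter_add_sdiff (hc x r) hS, Set.inter_eq_self_of_subset_right hsub]
    have hSt : volume S ≠ ⊤ := ne_top_of_le_ne_top (hc_vol_ne_top x r) (measure_mono hsub)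
    rw [← h1, two_mul] at hvol
    have h2 := (ENNReal.add_le_add_iff_left hSt).1 hvol
    rw [← h1, two_mul]
    gcongr
  have key := N_mul x hr (hv.1.indicator hTm) hv.inv.1 ha hb hc0 (by rw [hcdef, one_div_one_div])
  have e1 : N (hc x r) (T.indicator v) a =
      ((volume (hc x r))⁻¹ * ∫⁻ y in T, v y ^ a) ^ (1 / a) := by
    unfold N avgE
    congr 2
    have hTT : ∫⁻ y in T, v y ^ a = ∫⁻ y in T ∩ hc x r, v y ^ a := by
      rw [Set.inter_eq_self_of_subset_left hTsub]
    rw [hTT, ← setLIntegral_indicator hTm]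
    refine lintegral_congr fun y => ?_
    by_cases hy : y ∈ T <;> simp [hy, ha]
  have e2 : N (hc x r) (fun y => T.indicator v y * (v y)⁻¹) c =
      ((volume (hc x r))⁻¹ * volume T) ^ (1 / c) := by
    have : (fun y => T.indicator v y * (v y)⁻¹) =ᵐ[volume] T.indicator (fun _ => 1) := by
      filter_upwards [hv.2] with y hy
      by_cases hyT : y ∈ T
      · simp [hyT, ENNReal.mul_inv_cancel hy.1 hy.2]
      · simp [hyT]
    rw [N_congr _ _ this]
    unfold N avgE
    congr 2
    have h2 : ∀ y, (T.indicator (fun _ => (1 : ℝ≥0∞)) y) ^ c = T.indicator (fun _ => 1) y := by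
      intro y
      by_cases hy : y ∈ T <;> simp [hy, hc0]
    simp only [h2]
    rw [lintegral_indicator hTm, lintegral_one, Measure.restrict_apply MeasurableSet.univ,
      Set.univ_inter, Measure.restrict_apply hTm, Set.inter_eq_self_of_subset_left hTsub]
  have V0 := hc_vol_ne_zero x hr
  have Vt := hc_vol_ne_top x r
  have h3 : 1 ≤ 2 ^ (1 / c) * ((volume (hc x r))⁻¹ * volume T) ^ (1 / c) := by
    rw [← ENNReal.mul_rpow_of_nonneg _ _ (by positivity)]
    refine ENNReal.one_le_rpow ?_ (by positivity)
    rw [mul_left_comm]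
    calc (1 : ℝ≥0∞) = (volume (hc x r))⁻¹ * volume (hc x r) := (ENNReal.inv_mul_cancel V0 Vt).symm
      _ ≤ _ := by gcongr
  rw [e1, e2] at key
  have hNfin := h'.N_ne_top hv hb x hr
  have h4 : N (hc x r) v a ≤
      (C * 2 ^ (1 / c)) * ((volume (hc x r))⁻¹ * ∫⁻ y in T, v y ^ a) ^ (1 / a) := by
    calc N (hc x r) v a ≤ N (hc x r) v a *
          (2 ^ (1 / c) * ((volume (hc x r))⁻¹ * volume T) ^ (1 / c)) := le_mul_of_one_le_right' h3
      _ ≤ N (hc x r) v a * (2 ^ (1 / c) * (((volume (hc x r))⁻¹ * ∫⁻ y in T, v y ^ a) ^ (1 / a) *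
            N (hc x r) (fun y => (v y)⁻¹) b)) := by gcongr
      _ = (N (hc x r) v a * N (hc x r) (fun y => (v y)⁻¹) b) * 2 ^ (1 / c) *
          ((volume (hc x r))⁻¹ * ∫⁻ y in T, v y ^ a) ^ (1 / a) := by ring
      _ ≤ _ := by gcongr; exact hC x r hr
  have h5 := ENNReal.rpow_le_rpow h4 ha.le
  unfold N avgE at h5
  rw [ENNReal.mul_rpow_of_nonneg _ _ ha.le, ← ENNReal.rpow_mul, ← ENNReal.rpow_mul,
    one_div_mul_cancel ha.ne', ENNReal.rpow_one, ENNReal.rpow_one, mul_left_comm] at h5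
  have h6 := (ENNReal.mul_le_mul_iff_right (ENNReal.inv_ne_zero.2 Vt)
    (ENNReal.inv_ne_top.2 V0)).1 h5
  refine h6.trans (le_of_eq ?_)
  congr 1
  rw [ENNReal.coe_rpow_of_nonneg _ ha.le, ENNReal.coe_mul,
    ENNReal.coe_rpow_of_nonneg _ (by positivity)]
  simp

theorem choose_eps (d : ℕ) (D : ℝ) (hD : 1 ≤ D) : ∃ ε : ℝ, 0 < ε ∧ ∃ K : ℝ, 0 < K ∧
    (2 : ℝ) ^ ε + K * (2 ^ d * 2) ^ ε * (1 - 1 / D) ≤ K := by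
  have hD0 : 0 < D := by linarith
  have ht : Tendsto (fun ε : ℝ => ((2 : ℝ) ^ d * 2) ^ ε * (1 - 1 / D)) (𝓝[>] 0)
      (𝓝 (((2 : ℝ) ^ d * 2) ^ (0 : ℝ) * (1 - 1 / D))) := by
    refine Tendsto.mono_left ?_ nhdsWithin_le_nhds
    exact ((Real.continuous_const_rpow (by positivity)).tendsto 0).mul_const _
  rw [Real.rpow_zero, one_mul] at ht
  have hlt : 1 - 1 / D < 1 := by have : 0 < 1 / D := by positivity
                                 linarith
  obtain ⟨ε, hε, hpos⟩ := ((ht.eventually (gt_mem_nhds hlt)).and self_mem_nhdsWithin).exists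
  have hpos' : 0 < ε := hpos
  set γ := ((2 : ℝ) ^ d * 2) ^ ε * (1 - 1 / D)
  have h2 : (0 : ℝ) < 2 ^ ε := by positivity
  refine ⟨ε, hpos', 2 ^ ε / (1 - γ), div_pos h2 (by linarith), ?_⟩
  have : (1 : ℝ) - γ ≠ 0 := by linarith
  rw [mul_assoc]
  show _ + _ * γ ≤ _
  apply le_of_eq
  field_simp
  ring

theorem Muck.open_left {d : ℕ} {a b : ℝ} {v : (Fin d → ℝ) → ℝ≥0∞} (h : Muck a b v) (hv : IsW v)
    (ha : 0 < a) (hb : 0 < b) : ∃ A, a < A ∧ Muck A b v := by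
  obtain ⟨D₀, hD₀⟩ := h.A_inf hv ha hb
  set D : ℝ≥0 := max D₀ 1 with hDdef
  have hD1 : (1 : ℝ) ≤ D := by exact_mod_cast le_max_right _ _
  have hD0 : (0 : ℝ) < D := by linarith
  obtain ⟨ε, hε, K, hK0, hK⟩ := choose_eps d D hD1
  have hfin : ∀ (x : Fin d → ℝ) (r : ℝ), 0 < r → ∫⁻ y in hc x r, v y ^ a ≠ ⊤ :=
    fun x r hr => h.lint_ne_top hv ha hb x hr
  have hpos : ∀ (x : Fin d → ℝ) (r : ℝ), 0 < r → ∫⁻ y in hc x r, v y ^ a ≠ 0 := by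
    intro x r hr h0
    apply (hv.rpow a).avg_ne_zero x hr
    unfold avgE
    rw [h0, mul_zero]
  have hβ0 : (0 : ℝ) ≤ 1 - 1 / D := by
    rw [sub_nonneg, div_le_one hD0]; exact hD1
  have RH := full_RH (fun y => v y ^ a) (hv.rpow a).1 (ENNReal.ofReal K)
    (ENNReal.ofReal (1 - 1 / D)) ε hε hfin hpos ?_ ?_
  · refine ⟨a * (1 + ε), by nlinarith, ?_⟩
    obtain ⟨C, hC⟩ := h
    have hA : 0 < a * (1 + ε) := by positivity
    refine ⟨(Real.toNNReal K) ^ (1 / (a * (1 + ε))) * C, fun x r hr => ?_⟩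
    have h1 : avgE (hc x r) (fun y => v y ^ (a * (1 + ε))) ≤
        ENNReal.ofReal K * avgE (hc x r) (fun y => v y ^ a) ^ (1 + ε) := by
      have h2 := RH x r hr
      have h3 : av (fun y => v y ^ a) x r = avgE (hc x r) (fun y => v y ^ a) := rfl
      rw [h3] at h2
      rw [ENNReal.rpow_add_of_nonneg _ _ zero_le_one hε.le, ENNReal.rpow_one]
      simp only [ENNReal.rpow_mul]
      calc _ ≤ (volume (hc x r))⁻¹ * (ENNReal.ofReal K * (∫⁻ y in hc x r, v y ^ a) *
            avgE (hc x r) (fun y => v y ^ a) ^ ε) := by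
              unfold avgE at h2 ⊢
              gcongr
        _ = ENNReal.ofReal K * (((volume (hc x r))⁻¹ * (∫⁻ y in hc x r, v y ^ a)) *
            avgE (hc x r) (fun y => v y ^ a) ^ ε) := by ring
        _ = _ := rfl
    have h4 : N (hc x r) v (a * (1 + ε)) ≤
        ENNReal.ofReal K ^ (1 / (a * (1 + ε))) * N (hc x r) v a := by
      unfold N
      refine (ENNReal.rpow_le_rpow h1 (by positivity)).trans (le_of_eq ?_)
      rw [ENNReal.mul_rpow_of_nonneg _ _ (by positivity), ← ENNReal.rpow_mul]
      congr 2
      field_simp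
    calc _ ≤ (ENNReal.ofReal K ^ (1 / (a * (1 + ε))) * N (hc x r) v a) *
          N (hc x r) (fun y => (v y)⁻¹) b := by gcongr
      _ = ENNReal.ofReal K ^ (1 / (a * (1 + ε))) *
          (N (hc x r) v a * N (hc x r) (fun y => (v y)⁻¹) b) := by ring
      _ ≤ ENNReal.ofReal K ^ (1 / (a * (1 + ε))) * C := by gcongr; exact hC x r hr
      _ = _ := by
        rw [ENNReal.coe_mul, ENNReal.coe_rpow_of_nonneg _ (by positivity)]; rfl
  · intro x r hr S hS hsub hvol
    have h1 := hD₀ x r hr S hS hsub hvol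
    have h2 : ∫⁻ y in hc x r, v y ^ a =
        (∫⁻ y in S, v y ^ a) + ∫⁻ y in hc x r \ S, v y ^ a := by
      rw [← lintegral_inter_add_sdiff (fun y => v y ^ a) (hc x r) hS,
        Set.inter_eq_self_of_subset_right hsub]
    have hft := hfin x r hr
    have hSt : ∫⁻ y in S, v y ^ a ≠ ⊤ := ne_top_of_le_ne_top hft (lintegral_mono_set hsub)
    have hTt : ∫⁻ y in hc x r \ S, v y ^ a ≠ ⊤ :=
      ne_top_of_le_ne_top hft (lintegral_mono_set Set.sdiff_subset)
    generalize (∫⁻ y in hc x r, v y ^ a) = X at *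
    generalize (∫⁻ y in S, v y ^ a) = Y at *
    generalize (∫⁻ y in hc x r \ S, v y ^ a) = Z at *
    have h3 : X ≤ (D : ℝ≥0∞) * Z := h1.trans (by gcongr; exact le_max_left _ _)
    lift X to ℝ≥0 using hft
    lift Y to ℝ≥0 using hSt
    lift Z to ℝ≥0 using hTt
    rw [show ENNReal.ofReal (1 - 1 / D) = ((Real.toNNReal (1 - 1 / D) : ℝ≥0) : ℝ≥0∞) from rfl]
    norm_cast at h2 h3 ⊢
    rw [← NNReal.coe_le_coe] at h3 ⊢
    have h2' : (X : ℝ) = Y + Z := by rw [h2]; push_cast; rfl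
    push_cast at h3 ⊢
    rw [Real.coe_toNNReal _ hβ0]
    have h5 : (X : ℝ) / D ≤ Z := by rw [div_le_iff₀ hD0]; linarith
    have : (1 - 1 / (D : ℝ)) * X = X - X / D := by ring
    linarith
  · have h2 : (2 : ℝ≥0∞) = ENNReal.ofReal 2 := by simp
    rw [h2, ← ENNReal.ofReal_pow (by norm_num), ← ENNReal.ofReal_mul (by positivity),
      ENNReal.ofReal_rpow_of_pos (by norm_num), ENNReal.ofReal_rpow_of_pos (by positivity),
      ← ENNReal.ofReal_mul hK0.le, ← ENNReal.ofReal_mul (by positivity),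
      ← ENNReal.ofReal_add (by positivity) (by positivity)]
    exact ENNReal.ofReal_le_ofReal hK

theorem Muck.open_both {d : ℕ} {a b : ℝ} {v : (Fin d → ℝ) → ℝ≥0∞} (h : Muck a b v) (hv : IsW v)
    (ha : 0 < a) (hb : 0 < b) : ∃ A B, a < A ∧ b < B ∧ Muck A B v := by
  obtain ⟨A, hA, h1⟩ := h.open_left hv ha hb
  obtain ⟨B, hB, h2⟩ := h1.symm.open_left hv.inv hb (ha.trans hA)
  refine ⟨A, B, hA, hB, ?_⟩
  simpa using h2.symm

theorem cube_avg {d : ℕ} {Q : Set (Fin d → ℝ)} (h : IsCube Q) :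
    ∃ (x : Fin d → ℝ) (r : ℝ), 0 < r ∧ ∀ g, avgE Q g = avgE (hc x r) g := by
  obtain ⟨x, r, hr, rfl⟩ := h
  refine ⟨x, r, hr, fun g => ?_⟩
  unfold avgE
  rw [setLIntegral_congr (hc_ae_Icc x r), measure_congr (hc_ae_Icc x r)]

theorem cube_of {d : ℕ} (x : Fin d → ℝ) {r : ℝ} (hr : 0 < r) :
    ∃ Q : {S : Set (Fin d → ℝ) // IsCube S}, volume.restrict Q.1 = volume.restrict (hc x r) ∧
      ∀ g, avgE Q.1 g = avgE (hc x r) g := by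
  refine ⟨⟨_, x, r, hr, rfl⟩, (Measure.restrict_congr_set (hc_ae_Icc x r)).symm, fun g => ?_⟩
  unfold avgE
  rw [setLIntegral_congr (hc_ae_Icc x r), measure_congr (hc_ae_Icc x r)]

theorem oR_rpow {d : ℕ} {w : (Fin d → ℝ) → ℝ} (h : ∀ᵐ x ∂(volume : Measure (Fin d → ℝ)), 0 < w x)
    (s : ℝ) : (fun x => oR (w x ^ s)) =ᵐ[volume] fun x => oR (w x) ^ s := by
  filter_upwards [h] with x hx
  exact (ENNReal.ofReal_rpow_of_pos hx).symm

theorem isW_oR {d : ℕ} {w : (Fin d → ℝ) → ℝ} (hm : AEMeasurable w volume)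
    (h : ∀ᵐ x ∂(volume : Measure (Fin d → ℝ)), 0 < w x) : IsW fun x => oR (w x) := by
  refine ⟨hm.ennreal_ofReal, ?_⟩
  filter_upwards [h] with x hx
  simp [oR, hx]

theorem N_one {d : ℕ} (Q : Set (Fin d → ℝ)) (f : (Fin d → ℝ) → ℝ≥0∞) : N Q f 1 = avgE Q f := by
  simp [N]

theorem Ap_avg {d : ℕ} {w : (Fin d → ℝ) → ℝ}
    (h : ∀ᵐ x ∂(volume : Measure (Fin d → ℝ)), 0 < w x) (t : ℝ) (Q : Set (Fin d → ℝ)) :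
    (avgE Q fun x => oR (w x ^ (-(1:ℝ) / (t - 1)))) ^ (t - 1) =
      N Q (fun x => (oR (w x))⁻¹) (1 / (t - 1)) := by
  unfold N
  rw [one_div_one_div, avgE_congr Q (oR_rpow h _)]
  congr 2
  funext x
  rw [neg_div, ENNReal.rpow_neg, ENNReal.inv_rpow]

theorem Ap_to_Muck {d : ℕ} {w : (Fin d → ℝ) → ℝ} (hw : IsWeight w) {t : ℝ}
    (h : ApConst t w < ⊤) : Muck 1 (1 / (t - 1)) fun x => oR (w x) := by
  refine ⟨(ApConst t w).toNNReal, fun x r hr => ?_⟩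
  rw [ENNReal.coe_toNNReal h.ne]
  obtain ⟨Q, _, hQ⟩ := cube_of x hr
  have h1 : _ ≤ ApConst t w := le_iSup (fun Q : {S : Set (Fin d → ℝ) // IsCube S} => avgE Q.1 (fun x => oR (w x)) *
      (avgE Q.1 fun x => oR (w x ^ (-(1:ℝ) / (t - 1)))) ^ (t - 1)) Q
  simp only [hQ, Ap_avg hw.2] at h1
  rw [N_one]
  exact h1

theorem A1_to_Muck {d : ℕ} {w : (Fin d → ℝ) → ℝ} (hw : IsWeight w)
    (h : A1Const w < ⊤) : Muck 1 1 fun x => oR (w x) := by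
  refine ⟨(A1Const w).toNNReal, fun x r hr => ?_⟩
  rw [ENNReal.coe_toNNReal h.ne]
  obtain ⟨Q, hQr, hQ⟩ := cube_of x hr
  have h1 : _ ≤ A1Const w := le_iSup (fun Q : {S : Set (Fin d → ℝ) // IsCube S} => avgE Q.1 (fun x => oR (w x)) *
      essSup (fun x => oR ((w x)⁻¹)) (volume.restrict Q.1)) Q
  simp only [hQ, hQr] at h1
  rw [N_one, N_one]
  refine le_trans ?_ h1
  gcongr
  have e : (fun y => (oR (w y))⁻¹) =ᵐ[volume] fun y => oR ((w y)⁻¹) := by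
    filter_upwards [hw.2] with y hy
    exact (ENNReal.ofReal_inv_of_pos hy).symm
  rw [avgE_congr _ e]
  unfold avgE
  calc _ ≤ (volume (hc x r))⁻¹ * ∫⁻ _ in hc x r,
        essSup (fun x => oR ((w x)⁻¹)) (volume.restrict (hc x r)) := by
          exact mul_le_mul' le_rfl (lintegral_mono_ae (ENNReal.ae_le_essSup _))
    _ = _ := by
      rw [lintegral_const, Measure.restrict_apply MeasurableSet.univ, Set.univ_inter,
        mul_comm (essSup _ _), ← mul_assoc,
        ENNReal.inv_mul_cancel (hc_vol_ne_zero x hr) (hc_vol_ne_top x r), one_mul]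

theorem avg_weight_ne_top {d : ℕ} {w : (Fin d → ℝ) → ℝ} (hw : IsWeight w) (x : Fin d → ℝ) {r : ℝ}
    (hr : 0 < r) : avgE (hc x r) (fun y => oR (w y)) ≠ ⊤ := by
  unfold avgE
  refine ENNReal.mul_ne_top (ENNReal.inv_ne_top.2 (hc_vol_ne_zero x hr)) ?_
  rw [setLIntegral_congr (hc_ae x hr)]
  have h1 := hw.1.integrableOn_isCompact (isCompact_closedBall (fun i => x i + r / 2) (r / 2))
  exact (h1.lintegral_lt_top).ne

theorem LR_to_Muck {d : ℕ} {w : (Fin d → ℝ) → ℝ} (hw : IsWeight w) {t s : ℝ}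
    (h : ApConst t w < ⊤) (h' : RHConst s w < ⊤) : Muck s (1 / (t - 1)) fun x => oR (w x) := by
  obtain ⟨C, hC⟩ := Ap_to_Muck hw h
  refine ⟨(RHConst s w).toNNReal * C, fun x r hr => ?_⟩
  rw [ENNReal.coe_mul, ENNReal.coe_toNNReal h'.ne]
  obtain ⟨Q, _, hQ⟩ := cube_of x hr
  have h1 : _ ≤ RHConst s w := le_iSup (fun Q : {S : Set (Fin d → ℝ) // IsCube S} =>
    (avgE Q.1 fun x => oR (w x ^ s)) ^ (1 / s) * (avgE Q.1 fun x => oR (w x))⁻¹) Q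
  simp only [hQ, avgE_congr _ (oR_rpow hw.2 s)] at h1
  have h2 := hC x r hr
  rw [N_one] at h2
  have hY0 := (isW_oR hw.1.aestronglyMeasurable.aemeasurable hw.2).avg_ne_zero x hr
  have hYt := avg_weight_ne_top hw x hr
  calc _ = N (hc x r) (fun x => oR (w x)) s *
        ((avgE (hc x r) fun x => oR (w x))⁻¹ * (avgE (hc x r) fun x => oR (w x))) *
        N (hc x r) (fun y => (oR (w y))⁻¹) (1 / (t - 1)) := by
          rw [ENNReal.inv_mul_cancel hY0 hYt, mul_one]
    _ = (N (hc x r) (fun x => oR (w x)) s * (avgE (hc x r) fun x => oR (w x))⁻¹) *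
        ((avgE (hc x r) fun x => oR (w x)) *
        N (hc x r) (fun y => (oR (w y))⁻¹) (1 / (t - 1))) := by ring
    _ ≤ _ := by
      gcongr
      exact h1

theorem Muck_to_LR {d : ℕ} {w : (Fin d → ℝ) → ℝ} (hm : AEMeasurable w volume)
    (hpos : ∀ᵐ x ∂(volume : Measure (Fin d → ℝ)), 0 < w x) {t s : ℝ} (ht : 1 < t) (hs : 1 < s)
    (h : Muck s (1 / (t - 1)) fun x => oR (w x)) :
    IsWeight w ∧ ApConst t w < ⊤ ∧ RHConst s w < ⊤ := by
  have hW := isW_oR hm hpos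
  have ht0 : 0 < t - 1 := by linarith
  have hb : 0 < 1 / (t - 1) := by positivity
  have hfin : ∀ (x : Fin d → ℝ) (r : ℝ), 0 < r → avgE (hc x r) (fun y => oR (w y)) ≠ ⊤ := by
    intro x r hr
    rw [← N_one]
    exact ne_top_of_le_ne_top (h.N_ne_top hW hb x hr) (N_mono x hr hW.1 one_pos hs.le)
  have hwt : IsWeight w := by
    refine ⟨fun x => ?_, hpos⟩
    refine ⟨hc (fun i => x i - 1) 2, ?_, hm.aestronglyMeasurable.restrict, ?_⟩
    · refine Filter.mem_of_superset (Metric.ball_mem_nhds x one_pos) ?_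
      rw [ball_pi _ one_pos]
      intro y hy i hi
      have := hy i hi
      simp only [Real.ball_eq_Ioo, Set.mem_Ioo, Set.mem_Ico] at this ⊢
      constructor <;> linarith [this.1, this.2]
    · have h1 := hfin (fun i => x i - 1) 2 two_pos
      unfold avgE at h1
      rw [HasFiniteIntegral]
      have e : ∫⁻ y in hc (fun i => x i - 1) 2, ‖w y‖ₑ =
          ∫⁻ y in hc (fun i => x i - 1) 2, oR (w y) := by
        refine lintegral_congr_ae (ae_restrict_of_ae ?_)
        filter_upwards [hpos] with y hy
        exact Real.enorm_of_nonneg hy.le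
      rw [e]
      by_contra hcon
      rw [not_lt, top_le_iff] at hcon
      rw [hcon, ENNReal.mul_top (ENNReal.inv_ne_zero.2 (hc_vol_ne_top _ _))] at h1
      exact h1 rfl
  obtain ⟨C, hC⟩ := h
  refine ⟨hwt, lt_of_le_of_lt (iSup_le fun Q => ?_) (ENNReal.coe_lt_top (r := C)),
    lt_of_le_of_lt (iSup_le fun Q => ?_) (ENNReal.coe_lt_top (r := C))⟩
  · obtain ⟨x, r, hr, hQ⟩ := cube_avg Q.2
    simp only [hQ]
    rw [Ap_avg hpos, ← N_one]
    refine le_trans ?_ (hC x r hr)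
    gcongr
    exact N_mono x hr hW.1 one_pos hs.le
  · obtain ⟨x, r, hr, hQ⟩ := cube_avg Q.2
    simp only [hQ]
    rw [avgE_congr _ (oR_rpow hpos s)]
    have hone : 1 ≤ N (hc x r) (fun x => oR (w x)) 1 *
        N (hc x r) (fun y => (oR (w y))⁻¹) (1 / (t - 1)) := by
      have h1 := N_mul x hr hW.1 hW.inv.1 one_pos hb (c := 1 / (1 / 1 + 1 / (1 / (t - 1))))
        (by positivity) (by rw [one_div_one_div (1 / 1 + 1 / (1 / (t - 1)))])
      refine le_trans (le_of_eq ?_) h1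
      have : (fun y => oR (w y) * (oR (w y))⁻¹) =ᵐ[volume] fun _ => 1 := by
        filter_upwards [hW.2] with y hy
        exact ENNReal.mul_inv_cancel hy.1 hy.2
      rw [N_congr _ _ this]
      have := nu_prob x hr
      unfold N
      rw [avgE_eq]
      simp
    rw [N_one] at hone
    rw [← div_eq_mul_inv]
    refine ENNReal.div_le_of_le_mul ?_
    calc (avgE (hc x r) fun x => oR (w x) ^ s) ^ (1 / s) = N (hc x r) (fun x => oR (w x)) s := rfl
      _ ≤ N (hc x r) (fun x => oR (w x)) s * _ := le_mul_of_one_le_right' hone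
      _ = (N (hc x r) (fun x => oR (w x)) s * N (hc x r) (fun y => (oR (w y))⁻¹) (1 / (t - 1))) *
          avgE (hc x r) fun x => oR (w x) := by ring
      _ ≤ _ := by gcongr; exact hC x r hr

theorem Muck_mul {d : ℕ} {v v1 : (Fin d → ℝ) → ℝ≥0∞} {A B a1 b1 α β θ : ℝ} (hv : IsW v)
    (hv1 : IsW v1) (h : Muck A B v) (h1 : Muck a1 b1 v1) (hA : 0 < A) (hB : 0 < B) (ha1 : 0 < a1)
    (hb1 : 0 < b1) (hα : 0 < α) (hβ : 0 < β) (hθ : 0 < θ) (e1 : 1 / A + θ / b1 ≤ 1 / α)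
    (e2 : 1 / B + θ / a1 ≤ 1 / β) : Muck α β fun y => v y * (v1 y)⁻¹ ^ θ := by
  obtain ⟨C, hC⟩ := h
  obtain ⟨C1, hC1⟩ := h1
  refine ⟨C * C1 ^ θ, fun x r hr => ?_⟩
  have n1 := N_mul x hr hv.1 (hv1.inv.rpow θ).1 hA (div_pos hb1 hθ) hα (by rwa [one_div_div])
  have n2 := N_mul x hr hv.inv.1 (hv1.rpow θ).1 hB (div_pos ha1 hθ) hβ (by rwa [one_div_div])
  rw [N_rpow _ _ hθ (div_pos hb1 hθ), mul_div_cancel₀ _ hθ.ne'] at n1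
  rw [N_rpow _ _ hθ (div_pos ha1 hθ), mul_div_cancel₀ _ hθ.ne'] at n2
  have e : (fun y => (v y * (v1 y)⁻¹ ^ θ)⁻¹) =ᵐ[volume] fun y => (v y)⁻¹ * v1 y ^ θ := by
    filter_upwards [hv.2] with y hy
    rw [ENNReal.mul_inv (Or.inl hy.1) (Or.inl hy.2), ENNReal.inv_rpow, inv_inv]
  rw [N_congr _ _ e]
  calc _ ≤ (N (hc x r) v A * N (hc x r) (fun x => (v1 x)⁻¹) b1 ^ θ) *
        (N (hc x r) (fun x => (v x)⁻¹) B * N (hc x r) v1 a1 ^ θ) := by gcongr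
    _ = (N (hc x r) v A * N (hc x r) (fun x => (v x)⁻¹) B) *
        (N (hc x r) v1 a1 * N (hc x r) (fun x => (v1 x)⁻¹) b1) ^ θ := by
          rw [ENNReal.mul_rpow_of_nonneg _ _ hθ.le]; ring
    _ ≤ C * C1 ^ θ := by
      gcongr
      · exact hC x r hr
      · exact hC1 x r hr
    _ = _ := by rw [ENNReal.coe_mul, ENNReal.coe_rpow_of_nonneg _ hθ.le]

theorem choose_theta {δ1 δ2 M1 M2 : ℝ} (h1 : 0 < δ1) (h2 : 0 < δ2) (hM1 : 0 < M1) (hM2 : 0 < M2) :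
    ∃ θ : ℝ, 0 < θ ∧ θ < 1 ∧ θ * M1 ≤ δ1 ∧ θ * M2 ≤ δ2 := by
  refine ⟨min (1 / 2) (min (δ1 / M1) (δ2 / M2)), by positivity, ?_, ?_, ?_⟩
  · exact lt_of_le_of_lt (min_le_left _ _) (by norm_num)
  · rw [← le_div_iff₀ hM1]
    exact (min_le_right _ _).trans (min_le_left _ _)
  · rw [← le_div_iff₀ hM2]
    exact (min_le_right _ _).trans (min_le_right _ _)

theorem first_weight {d : ℕ} {pm pp q1 : ℝ} (hpm : 0 < pm) (hq1 : q1 ∈ Set.Icc pm pp)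
    {w1 : (Fin d → ℝ) → ℝ} (hw1 : MemLR pm pp q1 w1) : ∃ a1 b1 : ℝ, 0 < a1 ∧ 0 < b1 ∧
      Muck a1 b1 fun x => oR (w1 x) ^ (1 / q1) := by
  have hq10 : 0 < q1 := lt_of_lt_of_le hpm hq1.1
  obtain ⟨a, b, ha, hb, h⟩ : ∃ a b : ℝ, 0 < a ∧ 0 < b ∧ Muck a b fun x => oR (w1 x) := by
    rcases hq1.1.eq_or_lt with h | h
    · exact ⟨1, 1, one_pos, one_pos, A1_to_Muck hw1.1 (hw1.2.1 h.symm)⟩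
    · have : 0 < q1 / pm - 1 := by rw [sub_pos, one_lt_div hpm]; exact h
      exact ⟨1, 1 / (q1 / pm - 1), one_pos, by positivity, Ap_to_Muck hw1.1 (hw1.2.2.1 h)⟩
  exact ⟨_, _, by positivity, by positivity, h.rpow ha hb (s := 1 / q1) (by positivity)⟩

theorem exps {pm pp q : ℝ} (hpm : 0 < pm) (hq : q ∈ Set.Ioo pm pp) :
    1 < conjExp (pp / q) ∧ 1 < q / pm ∧ 1 / (q * conjExp (pp / q)) = 1 / q - 1 / pp ∧
      1 / (q * (1 / (q / pm - 1))) = 1 / pm - 1 / q := by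
  have hq0 : 0 < q := hpm.trans hq.1
  have hpp : 0 < pp := hq0.trans hq.2
  have h1 : 0 < pp / q - 1 := by rw [sub_pos, one_lt_div hq0]; exact hq.2
  have h2 : 0 < q / pm - 1 := by rw [sub_pos, one_lt_div hpm]; exact hq.1
  unfold conjExp
  refine ⟨by rw [one_lt_div h1]; linarith, by linarith, ?_, ?_⟩
  · have : pp - q ≠ 0 := by linarith [hq.2]
    have e : pp / q - 1 = (pp - q) / q := by field_simp
    rw [e]
    field_simp
  · rw [one_div, mul_inv, one_div, inv_inv]
    field_simp

theorem Muck.congr {d : ℕ} {a b : ℝ} {v v' : (Fin d → ℝ) → ℝ≥0∞} (h : Muck a b v)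
    (e : v =ᵐ[volume] v') : Muck a b v' := by
  obtain ⟨C, hC⟩ := h
  refine ⟨C, fun x r hr => ?_⟩
  have e2 : (fun y => (v y)⁻¹) =ᵐ[volume] fun y => (v' y)⁻¹ := by
    filter_upwards [e] with y hy
    rw [hy]
  rw [← N_congr _ _ e, ← N_congr _ _ e2]
  exact hC x r hr

end LRI

/-- Lemma main2: limited-range interpolation couple for weights in
`A_{q/p₋} ∩ RH_{(p₊/q)'}`. -/
theorem limited_range_interpolation_couple (d : ℕ) (pm pp q1 q : ℝ)
    (hpm : 1 ≤ pm) (hmp : pm < pp) (hq1 : q1 ∈ Set.Icc pm pp) (hq : q ∈ Set.Ioo pm pp)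
    (w1 w : (Fin d → ℝ) → ℝ) (hw1 : MemLR pm pp q1 w1) (hw : MemLR pm pp q w) :
    ∃ (q0 θ : ℝ) (w0 : (Fin d → ℝ) → ℝ),
      q0 ∈ Set.Ioo pm pp ∧ 0 < θ ∧ θ < 1 ∧ MemLR pm pp q0 w0 ∧
      1 / q = (1 - θ) / q0 + θ / q1 ∧
      ∀ᵐ x ∂(volume : Measure (Fin d → ℝ)),
        w x ^ (1 / q) = w0 x ^ ((1 - θ) / q0) * w1 x ^ (θ / q1) := by
  have hpm0 : 0 < pm := by linarith
  have hpp0 : 0 < pp := by linarith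
  have hq0 : 0 < q := hpm0.trans hq.1
  have hq10 : 0 < q1 := lt_of_lt_of_le hpm0 hq1.1
  obtain ⟨a1, b1, ha1, hb1, hM1⟩ := LRI.first_weight hpm0 hq1 hw1
  obtain ⟨hs, ht, ea, eb⟩ := LRI.exps hpm0 hq
  have hMw := LRI.LR_to_Muck hw.1 (hw.2.2.1 hq.1) (hw.2.2.2 hq.2)
  set s := conjExp (pp / q) with hsdef
  set b' := 1 / (q / pm - 1) with hb'
  have hb'0 : 0 < b' := one_div_pos.2 (by linarith)
  have hs0 : 0 < s := by linarith
  have hWw := LRI.isW_oR hw.1.1.aestronglyMeasurable.aemeasurable hw.1.2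
  have hWw1 := LRI.isW_oR hw1.1.1.aestronglyMeasurable.aemeasurable hw1.1.2
  have hMv := hMw.rpow hs0 hb'0 (s := 1 / q) (by positivity)
  obtain ⟨A, B, hA, hB, hMAB⟩ := hMv.open_both (hWw.rpow _) (by positivity) (by positivity)
  have eqa : s / (1 / q) = q * s := by field_simp
  have eqb : b' / (1 / q) = q * b' := by field_simp
  rw [eqa] at hA
  rw [eqb] at hB
  have hqs : 0 < q * s := by positivity
  have hqb : 0 < q * b' := by positivity
  have hA0 : 0 < A := hqs.trans hA
  have hB0 : 0 < B := hqb.trans hB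
  have dA : 0 < 1 / (q * s) - 1 / A := by rw [sub_pos]; exact one_div_lt_one_div_of_lt hqs hA
  have dB : 0 < 1 / (q * b') - 1 / B := by rw [sub_pos]; exact one_div_lt_one_div_of_lt hqb hB
  obtain ⟨θ, hθ0, hθ1, hθA, hθB⟩ := LRI.choose_theta dA dB
    (M1 := 1 / b1 + 1 / q1) (M2 := 1 / a1 + 1 / pm) (by positivity) (by positivity)
  rw [ea] at hθA
  rw [eb] at hθB
  have hA1 : 0 < 1 / A := by positivity
  have hB1 : 0 < 1 / B := by positivity
  have hpp1 : 0 < 1 / pp := by positivity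
  have hq11 : 0 < 1 / q1 := by positivity
  have hθb : 0 < θ / b1 := by positivity
  have hθa : 0 < θ / a1 := by positivity
  have h1θ : 0 < 1 - θ := by linarith
  have k1 : 1 / A + θ / b1 ≤ 1 / q - θ / q1 - (1 - θ) / pp := by
    have : 0 < θ * (1 / pp) := by positivity
    have e1 : θ * (1 / b1 + 1 / q1) = θ / b1 + θ / q1 := by ring
    have e2 : (1 - θ) / pp = 1 / pp - θ * (1 / pp) := by ring
    linarith
  have k2 : 1 / B + θ / a1 ≤ (1 - θ) / pm - (1 / q - θ / q1) := by
    have : 0 < θ * (1 / q1) := by positivity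
    have e1 : θ * (1 / a1 + 1 / pm) = θ / a1 + θ / pm := by ring
    have e2 : (1 - θ) / pm = 1 / pm - θ / pm := by ring
    have e3 : θ / q1 = θ * (1 / q1) := by ring
    linarith
  have hD : 0 < 1 / q - θ / q1 := by
    have : 0 < (1 - θ) / pp := by positivity
    linarith
  set q0 := (1 - θ) / (1 / q - θ / q1) with hq0def
  have hq00 : 0 < q0 := by positivity
  have hqq : (1 - θ) / q0 = 1 / q - θ / q1 := by
    rw [hq0def, div_div_cancel₀ h1θ.ne']
  have hq0mem : q0 ∈ Set.Ioo pm pp := by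
    constructor
    · have : (1 - θ) / q0 < (1 - θ) / pm := by linarith
      exact (div_lt_div_iff_of_pos_left h1θ hq00 hpm0).1 this
    · have : (1 - θ) / pp < (1 - θ) / q0 := by linarith
      exact (div_lt_div_iff_of_pos_left h1θ hpp0 hq00).1 this
  obtain ⟨hs', ht', ea', eb'⟩ := LRI.exps hpm0 hq0mem
  have hs0' : 0 < conjExp (pp / q0) := by linarith
  have hb0' : 0 < 1 / (q0 / pm - 1) := one_div_pos.2 (by linarith)
  set s0 := conjExp (pp / q0)
  set b0 := 1 / (q0 / pm - 1)
  have hσ : 0 < q0 / (1 - θ) := by positivity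
  have hM0 := LRI.Muck_mul (α := q0 / (1 - θ) * s0) (β := q0 / (1 - θ) * b0) (θ := θ)
    (hWw.rpow (1 / q)) (hWw1.rpow (1 / q1)) hMAB hM1 hA0 hB0 ha1 hb1 (by positivity)
    (by positivity) hθ0
    (by
      have : 1 / (q0 / (1 - θ) * s0) = (1 - θ) * (1 / (q0 * s0)) := by field_simp
      rw [this, ea']
      have : (1 - θ) * (1 / q0 - 1 / pp) = (1 - θ) / q0 - (1 - θ) / pp := by ring
      rw [this, hqq]
      exact k1)
    (by
      have : 1 / (q0 / (1 - θ) * b0) = (1 - θ) * (1 / (q0 * b0)) := by field_simp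
      rw [this, eb']
      have : (1 - θ) * (1 / pm - 1 / q0) = (1 - θ) / pm - (1 - θ) / q0 := by ring
      rw [this, hqq]
      exact k2)
  have hM0' := hM0.rpow (by positivity) (by positivity) hσ
  rw [mul_div_cancel_left₀ _ hσ.ne', mul_div_cancel_left₀ _ hσ.ne'] at hM0'
  let w0 : (Fin d → ℝ) → ℝ := fun x =>
    (w x ^ (1 / q) * ((w1 x ^ (1 / q1))⁻¹) ^ θ) ^ (q0 / (1 - θ))
  have hw0m : AEMeasurable w0 volume :=
    ((hw.1.1.aestronglyMeasurable.aemeasurable.pow_const _).mul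
      (((hw1.1.1.aestronglyMeasurable.aemeasurable.pow_const _).inv).pow_const _)).pow_const _
  have hw0p : ∀ᵐ x ∂(volume : Measure (Fin d → ℝ)), 0 < w0 x := by
    filter_upwards [hw.1.2, hw1.1.2] with x hx hx1
    simp only [w0]
    positivity
  have hae : (fun x => (oR (w x) ^ (1 / q) * ((oR (w1 x) ^ (1 / q1))⁻¹) ^ θ) ^ (q0 / (1 - θ)))
      =ᵐ[volume] fun x => oR (w0 x) := by
    filter_upwards [hw.1.2, hw1.1.2] with x hx hx1
    simp only [w0, oR]
    rw [ENNReal.ofReal_rpow_of_pos hx, ENNReal.ofReal_rpow_of_pos hx1,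
      ← ENNReal.ofReal_inv_of_pos (by positivity), ENNReal.ofReal_rpow_of_pos (by positivity),
      ← ENNReal.ofReal_mul (by positivity), ENNReal.ofReal_rpow_of_pos (by positivity)]
  have hM0'' : LRI.Muck s0 b0 fun x => oR (w0 x) := hM0'.congr hae
  obtain ⟨r1, r2, r3⟩ := LRI.Muck_to_LR hw0m hw0p ht' hs' hM0''
  refine ⟨q0, θ, w0, hq0mem, hθ0, hθ1,
    ⟨r1, fun h => absurd h hq0mem.1.ne', fun _ => r2, fun _ => r3⟩, by rw [hqq]; ring, ?_⟩
  filter_upwards [hw.1.2, hw1.1.2] with x hx hx1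
  simp only [w0]
  have hz : 0 < w x ^ (1 / q) * ((w1 x ^ (1 / q1))⁻¹) ^ θ := by positivity
  rw [← Real.rpow_mul hz.le, show q0 / (1 - θ) * ((1 - θ) / q0) = 1 by field_simp, Real.rpow_one,
    Real.inv_rpow (by positivity), ← Real.rpow_mul hx1.le,
    show 1 / q1 * θ = θ / q1 by ring]
  have : w1 x ^ (θ / q1) ≠ 0 := by positivity
  field_simp
end
end
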